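/- (Theorem 10) Suppose 0 < θ₀ < θ₁ < 1, 0 < r₀, q₀, q₁ ≤ ∞, a₀, a₁, b₀ ∈ SV, and ‖s^{-1/r₀} b₀(s)/a₀(s)‖_{r₀,(1,∞)} < ∞. (i) If σ is a strictly increasing differentiable function on (0,∞) with σ(t) ≈ t^{1-θ₀} a₀(t) and a^# = (b₀∘σ^{(-1)})/(a₀∘σ^{(-1)}) (σ^{(-1)} the inverse of σ), then (Ā_{θ₀,q₀;a₀}, A₁)_{0,r₀;a^#} ≅ Ā^𝓛_{θ₀,r₀,b₀,q₀,a₀}. (ii) If in addition ‖s^{-1/q₁} a₁(s)‖_{q₁,(0,1)} < ∞ and σ is strictly increasing differentiable with σ(t) ≈ t^{1-θ₀} a₀(t)/‖s^{-1/q₁} a₁(s)‖_{q₁,(0,t)} and a^# = (b₀∘σ^{(-1)})/(a₀∘σ^{(-1)}), then (Ā_{θ₀,q₀;a₀}, Ā_{1,q₁;a₁})_{0,r₀;a^#} ≅ Ā^𝓛_{θ₀,r₀,b₀,q₀,a₀}. (iii) If σ is strictly increasing differentiable with σ(t) ≈ t^{θ₁-θ₀} a₀(t)/a₁(t) and a^#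 = (b₀∘σ^{(-1)})/(a₀∘σ^{(-1)}), then (Ā_{θ₀,q₀;a₀}, Ā_{θ₁,q₁;a₁})_{0,r₀;a^#} ≅ Ā^𝓛_{θ₀,r₀,b₀,q₀,a₀}. -/

import Mathlib

open MeasureTheory Set ENNReal Filter

noncomputable section

/-- The `L_q` quasi-norm (with respect to Lebesgue measure) of an `ℝ≥0∞`-valued
function over a set of reals; for `q = ∞` it is the essential supremum. -/
def LqNorm (q : ℝ≥0∞) (s : Set ℝ) (g : ℝ → ℝ≥0∞) : ℝ≥0∞ :=
  if q = ∞ then essSup g (volume.restrict s)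
  else (∫⁻ t in s, g t ^ q.toReal) ^ q⁻¹.toReal

/-- The weight `s ↦ s ^ (-1/r) * b s`, as an `ℝ≥0∞`-valued function
(`1/∞ = 0` by convention). -/
def svWgt (r : ℝ≥0∞) (b : ℝ → ℝ) : ℝ → ℝ≥0∞ :=
  fun s => ENNReal.ofReal (s ^ (-(r⁻¹.toReal)) * b s)

/-- `f` and `g` are equivalent on `s`: each is bounded by a constant multiple
of the other there. -/
def EquivOn (s : Set ℝ) (f g : ℝ → ℝ) : Prop :=
  ∃ C : ℝ, 0 < C ∧ ∀ t ∈ s, C⁻¹ * g t ≤ f t ∧ f t ≤ C * g t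

/-- A positive measurable function `b` on `(0,∞)` is slowly varying if for every
`ε > 0`, `t ^ ε * b t` is equivalent to a non-decreasing function and
`t ^ (-ε) * b t` is equivalent to a non-increasing function. -/
def SlowlyVarying (b : ℝ → ℝ) : Prop :=
  AEMeasurable b (volume.restrict (Ioi 0)) ∧ (∀ t ∈ Ioi (0:ℝ), 0 < b t) ∧
    ∀ ε : ℝ, 0 < ε →
      (∃ g : ℝ → ℝ, MonotoneOn g (Ioi 0) ∧ EquivOn (Ioi 0) (fun t => t ^ ε * b t) g) ∧
      (∃ g : ℝ → ℝ, AntitoneOn g (Ioi 0) ∧ EquivOn (Ioi 0) (fun t => t ^ (-ε) * b t) g)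

/-- A quasi-Banach space continuously embedded into the ambient (Hausdorff) space `E`,
recorded via its extended-real-valued quasi-norm; the space itself is the set of
vectors of finite quasi-norm. -/
structure QuasiBanach (E : Type*) [AddCommGroup E] [Module ℝ E] where
  N : E → ℝ≥0∞
  zero : N 0 = 0
  definite : ∀ x, N x = 0 → x = 0
  smul : ∀ (c : ℝ) (x : E), N (c • x) = ENNReal.ofReal |c| * N x
  quasi : ∃ C : ℝ≥0∞, 1 ≤ C ∧ C ≠ ∞ ∧ ∀ x y, N (x + y) ≤ C * (N x + N y)
  complete : ∀ f : ℕ → E,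
    (∀ ε : ℝ≥0∞, 0 < ε → ∃ M : ℕ, ∀ m ≥ M, ∀ n ≥ M, N (f m - f n) < ε) →
    (∀ n, N (f n) ≠ ∞) →
    ∃ g : E, N g ≠ ∞ ∧ Tendsto (fun n => N (f n - g)) atTop (nhds 0)

variable {E : Type*} [AddCommGroup E] [Module ℝ E]

/-- The Peetre K-functional of the couple whose quasi-norms are `N₀`, `N₁`. -/
def Kf (N₀ N₁ : E → ℝ≥0∞) (t : ℝ) (f : E) : ℝ≥0∞ :=
  ⨅ g : E, N₀ g + ENNReal.ofReal t * N₁ (f - g)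

/-- The quasi-norm of the real interpolation space `Ā_{θ,q;b}`. -/
def normK (N₀ N₁ : E → ℝ≥0∞) (θ : ℝ) (q : ℝ≥0∞) (b : ℝ → ℝ) (f : E) : ℝ≥0∞ :=
  LqNorm q (Ioi 0) fun u =>
    ENNReal.ofReal (u ^ (-θ - q⁻¹.toReal) * b u) * Kf N₀ N₁ u f

/-- The quasi-norm of the limiting interpolation space `Ā^𝓛_{σ,r,b,q,a}`. -/
def normL (N₀ N₁ : E → ℝ≥0∞) (σ : ℝ) (r q : ℝ≥0∞) (b a : ℝ → ℝ) (f : E) : ℝ≥0∞ :=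
  LqNorm r (Ioi 0) fun t =>
    ENNReal.ofReal (t ^ (-(r⁻¹.toReal)) * (b t / a t)) *
      LqNorm q (Ioo 0 t) fun u =>
        ENNReal.ofReal (u ^ (-σ - q⁻¹.toReal) * a u) * Kf N₀ N₁ u f

/-- The quasi-norm of the limiting interpolation space `Ā^𝓡_{σ,r,b,q,a}`. -/
def normR (N₀ N₁ : E → ℝ≥0∞) (σ : ℝ) (r q : ℝ≥0∞) (b a : ℝ → ℝ) (f : E) : ℝ≥0∞ :=
  LqNorm r (Ioi 0) fun t =>
    ENNReal.ofReal (t ^ (-(r⁻¹.toReal)) * (b t / a t)) *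
      LqNorm q (Ioi t) fun u =>
        ENNReal.ofReal (u ^ (-σ - q⁻¹.toReal) * a u) * Kf N₀ N₁ u f

/-- Two (extended-real-valued) quasi-norms define the same space with
equivalent quasi-norms. -/
def EquivNorms (nX nY : E → ℝ≥0∞) : Prop :=
  ∃ C : ℝ≥0∞, 0 < C ∧ C ≠ ∞ ∧ ∀ f : E, C⁻¹ * nY f ≤ nX f ∧ nX f ≤ C * nY f

/-!
Let `w` be the weight `u ^ (-θ₀) * a₀ u`, let `J t` be the `𝓛`-type quasi-norm of `w * K(·, f)` over
`(0, t)`, and let `ρ` be the characteristic function of the second space. A Holmstedt-type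
decomposition argument gives `J t ≲ K (σ t, f) ≲ sup_{s ≥ t} (t / s) ^ κ * J s` for `σ ≈ w * ρ` and
some `κ > 0`, where `K` on the right is the functional of the couple to be interpolated. As `σ`
grows like a positive power while `b₀ / a₀` varies slowly, each block `[b ^ k, b ^ (k + 1))` has an
image under `σ` of bounded `du / u`-measure and `b₀ / a₀` is almost constant on it. So the change
of variables `u = σ t` can be carried out on sequences, without differentiating `σ`, and a
geometric series removes the damped supremum.
-/

/-! ### The measure `du / u` -/

/-- The Haar measure `du / u` of the multiplicative group `(0, ∞)`, as a measure on `ℝ`. It absorbs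
the factors `u ^ (-1 / q)` of the weighted `L_q` quasi-norms. -/
def logMeasure : Measure ℝ :=
  (volume.restrict (Ioi 0)).withDensity fun u => ENNReal.ofReal u⁻¹

theorem measurable_ofReal_inv : Measurable fun u : ℝ => ENNReal.ofReal u⁻¹ :=
  measurable_inv.ennreal_ofReal

theorem logMeasure_absolutelyContinuous : logMeasure ≪ volume.restrict (Ioi 0) :=
  withDensity_absolutelyContinuous _ _

theorem ae_logMeasure_pos : ∀ᵐ u ∂logMeasure, 0 < u :=
  logMeasure_absolutelyContinuous.ae_le (ae_restrict_mem measurableSet_Ioi)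

theorem setLIntegral_logMeasure {s : Set ℝ} (hs : MeasurableSet s) (hs₀ : s ⊆ Ioi 0)
    (F : ℝ → ℝ≥0∞) :
    ∫⁻ u in s, F u ∂logMeasure = ∫⁻ u in s, ENNReal.ofReal u⁻¹ * F u := by
  rw [logMeasure, setLIntegral_withDensity_eq_setLIntegral_mul_non_measurable _
    measurable_ofReal_inv _ hs (by simp), Measure.restrict_restrict_of_subset hs₀]
  rfl

theorem logMeasure_eq_map_exp : logMeasure = volume.map Real.exp := by
  ext s hs
  have hd : ∀ x ∈ Real.exp ⁻¹' s, HasDerivWithinAt Real.exp (Real.exp x) (Real.exp ⁻¹' s) x :=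
    fun x _ => (Real.hasDerivAt_exp x).hasDerivWithinAt
  have hcancel : ∀ x : ℝ, ENNReal.ofReal |Real.exp x| * ENNReal.ofReal (Real.exp x)⁻¹ = 1 :=
    fun x => by
      rw [abs_of_pos (Real.exp_pos x), ← ENNReal.ofReal_mul (Real.exp_pos x).le,
        mul_inv_cancel₀ (Real.exp_pos x).ne', ENNReal.ofReal_one]
  calc logMeasure s = ∫⁻ u in s ∩ Ioi 0, ENNReal.ofReal u⁻¹ := by
        rw [logMeasure, withDensity_apply _ hs, Measure.restrict_restrict hs]
    _ = ∫⁻ u in Real.exp '' (Real.exp ⁻¹' s), ENNReal.ofReal u⁻¹ := by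
        rw [image_preimage_eq_inter_range, Real.range_exp]
    _ = ∫⁻ _ in Real.exp ⁻¹' s, 1 := by
        simp only [lintegral_image_eq_lintegral_abs_deriv_mul (Real.measurable_exp hs) hd
          Real.exp_injective.injOn, hcancel]
    _ = volume.map Real.exp s := by
        rw [setLIntegral_one, Measure.map_apply Real.measurable_exp hs]

theorem logMeasure_Ico {a b : ℝ} (ha : 0 < a) (hb : 0 < b) :
    logMeasure (Ico a b) = ENNReal.ofReal (Real.log (b / a)) := by
  have : Real.exp ⁻¹' Ico a b = Ico (Real.log a) (Real.log b) := by
    ext x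
    simp [Real.log_le_iff_le_exp ha, Real.lt_log_iff_exp_lt hb]
  rw [logMeasure_eq_map_exp, Measure.map_apply Real.measurable_exp measurableSet_Ico, this,
    Real.volume_Ico, Real.log_div hb.ne' ha.ne']

theorem map_mul_left_logMeasure {c : ℝ} (hc : 0 < c) : logMeasure.map (c * ·) = logMeasure := by
  have hcomp : (c * ·) ∘ Real.exp = Real.exp ∘ (Real.log c + ·) := by
    ext x
    simp [Real.exp_add, Real.exp_log hc]
  rw [logMeasure_eq_map_exp, Measure.map_map (measurable_const_mul c) Real.measurable_exp, hcomp,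
    ← Measure.map_map Real.measurable_exp (measurable_const_add _), map_add_left_eq_self]

/-! ### Quasi-norms with respect to `du / u` -/

theorem LqNorm_eq_eLpNorm_logMeasure {q : ℝ≥0∞} (hq : q ≠ 0) {s : Set ℝ} (hs : MeasurableSet s)
    (hs₀ : s ⊆ Ioi 0) (F : ℝ → ℝ≥0∞) :
    LqNorm q s (fun u => ENNReal.ofReal (u ^ (-q⁻¹.toReal)) * F u) =
      eLpNorm F q (logMeasure.restrict s) := by
  rcases eq_or_ne q ∞ with rfl | hq_top
  · have hae : ae (logMeasure.restrict s) = ae (volume.restrict s) := by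
      rw [logMeasure, restrict_withDensity hs, Measure.restrict_restrict_of_subset hs₀]
      refine le_antisymm (withDensity_absolutelyContinuous _ _).ae_le
        (withDensity_absolutelyContinuous' measurable_ofReal_inv.aemeasurable ?_).ae_le
      filter_upwards [ae_restrict_mem hs] with u hu
      simpa using hs₀ hu
    simp [LqNorm, eLpNormEssSup, essSup, hae]
  · have hq_pos : 0 < q.toReal := ENNReal.toReal_pos hq hq_top
    rw [LqNorm, if_neg hq_top, eLpNorm_eq_lintegral_rpow_enorm_toReal hq hq_top,
      setLIntegral_logMeasure hs hs₀, ENNReal.toReal_inv, one_div]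
    congr 1
    refine setLIntegral_congr_fun hs fun u hu => ?_
    have hu : 0 < u := hs₀ hu
    simp only [enorm_eq_self]
    rw [ENNReal.mul_rpow_of_nonneg _ _ hq_pos.le, ENNReal.ofReal_rpow_of_nonneg (by positivity)
      hq_pos.le, ← Real.rpow_mul hu.le, neg_mul, inv_mul_cancel₀ hq_pos.ne', Real.rpow_neg_one]

theorem eLpNorm_le_const_mul {α : Type*} [MeasurableSpace α] {μ : Measure α} {F G : α → ℝ≥0∞}
    {c : ℝ≥0∞} (hc : c ≠ ∞) (h : ∀ᵐ x ∂μ, F x ≤ c * G x) (q : ℝ≥0∞) :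
    eLpNorm F q μ ≤ c * eLpNorm G q μ := by
  lift c to NNReal using hc
  exact eLpNorm_le_mul_eLpNorm_of_ae_le_mul' (by simpa using h) q

theorem eLpNorm_mul_const_le {α : Type*} [MeasurableSpace α] {μ : Measure α} {F G : α → ℝ≥0∞}
    {c : ℝ≥0∞} (hG : AEMeasurable G μ) (h : ∀ᵐ x ∂μ, F x ≤ G x * c) (q : ℝ≥0∞) :
    eLpNorm F q μ ≤ c * eLpNorm G q μ :=
  eLpNorm_le_mul_eLpNorm_of_ae_le_mul'' q hG.aestronglyMeasurable
    (by simpa only [enorm_eq_self, mul_comm] using h)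

theorem const_mul_eLpNorm_le {α : Type*} [MeasurableSpace α] {μ : Measure α} {F G : α → ℝ≥0∞}
    {c : ℝ≥0∞} (h : ∀ᵐ x ∂μ, c * G x ≤ F x) (q : ℝ≥0∞) : c * eLpNorm G q μ ≤ eLpNorm F q μ := by
  have of_ne_top : ∀ {d : ℝ≥0∞}, d ≠ ∞ → d ≤ c → d * eLpNorm G q μ ≤ eLpNorm F q μ := by
    intro d hd hdc
    rcases eq_or_ne d 0 with rfl | hd₀
    · simp
    rw [mul_comm, ← ENNReal.le_div_iff_mul_le (Or.inl hd₀) (Or.inl hd), div_eq_mul_inv, mul_comm]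
    refine eLpNorm_le_const_mul (ENNReal.inv_ne_top.2 hd₀) ?_ q
    filter_upwards [h] with x hx
    rw [mul_comm, ← div_eq_mul_inv, ENNReal.le_div_iff_mul_le (Or.inl hd₀) (Or.inl hd), mul_comm]
    exact (mul_le_mul_left hdc _).trans hx
  rcases eq_or_ne c ∞ with rfl | hc
  · rw [← ENNReal.iSup_natCast, ENNReal.iSup_mul]
    exact iSup_le fun n => of_ne_top (ENNReal.natCast_ne_top n) le_top
  · exact of_ne_top hc le_rfl

/-- The `L_q (du / u)` quasi-norm over the interval `(0, t)`. -/
def headNorm (q : ℝ≥0∞) (F : ℝ → ℝ≥0∞) (t : ℝ) : ℝ≥0∞ :=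
  eLpNorm F q (logMeasure.restrict (Ioo 0 t))

/-- The `L_q (du / u)` quasi-norm over the interval `(t, ∞)`. -/
def tailNorm (q : ℝ≥0∞) (F : ℝ → ℝ≥0∞) (t : ℝ) : ℝ≥0∞ :=
  eLpNorm F q (logMeasure.restrict (Ioi t))

section HeadTail

variable {q : ℝ≥0∞} {F G φ : ℝ → ℝ≥0∞} {c : ℝ≥0∞} {t : ℝ}

theorem headNorm_mono (q : ℝ≥0∞) (F : ℝ → ℝ≥0∞) : Monotone (headNorm q F) := fun _ _ hst =>
  eLpNorm_mono_measure F (Measure.restrict_mono (Ioo_subset_Ioo_right hst) le_rfl)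

theorem headNorm_le_eLpNorm (q : ℝ≥0∞) (F : ℝ → ℝ≥0∞) (t : ℝ) :
    headNorm q F t ≤ eLpNorm F q logMeasure :=
  eLpNorm_restrict_le _ _ _ _

theorem headNorm_le_const_mul (hc : c ≠ ∞) (h : ∀ u, 0 < u → u < t → F u ≤ c * G u) :
    headNorm q F t ≤ c * headNorm q G t :=
  eLpNorm_le_const_mul hc
    (by filter_upwards [ae_restrict_mem measurableSet_Ioo] with u hu using h u hu.1 hu.2) q

theorem tailNorm_le_const_mul (ht : 0 ≤ t) (hc : c ≠ ∞) (h : ∀ u, 0 < u → t < u → F u ≤ c * G u) :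
    tailNorm q F t ≤ c * tailNorm q G t :=
  eLpNorm_le_const_mul hc
    (by filter_upwards [ae_restrict_mem measurableSet_Ioi] with u hu
        using h u (ht.trans_lt hu) hu) q

theorem headNorm_le_mul_const (hφ : AEMeasurable φ logMeasure)
    (h : ∀ u, 0 < u → u < t → F u ≤ φ u * c) : headNorm q F t ≤ c * headNorm q φ t :=
  eLpNorm_mul_const_le hφ.restrict
    (by filter_upwards [ae_restrict_mem measurableSet_Ioo] with u hu using h u hu.1 hu.2) q

theorem tailNorm_le_mul_const (ht : 0 ≤ t) (hφ : AEMeasurable φ logMeasure)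
    (h : ∀ u, 0 < u → t < u → F u ≤ φ u * c) : tailNorm q F t ≤ c * tailNorm q φ t :=
  eLpNorm_mul_const_le hφ.restrict
    (by filter_upwards [ae_restrict_mem measurableSet_Ioi] with u hu
        using h u (ht.trans_lt hu) hu) q

theorem headNorm_add_le (hF : AEMeasurable F logMeasure) (hG : AEMeasurable G logMeasure) :
    headNorm q (F + G) t ≤ LpAddConst q * (headNorm q F t + headNorm q G t) :=
  eLpNorm_add_le' hF.restrict.aestronglyMeasurable hG.restrict.aestronglyMeasurable q

theorem eLpNorm_logMeasure_le_headNorm_add_tailNorm (hF : AEMeasurable F logMeasure) (t : ℝ) :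
    eLpNorm F q logMeasure ≤ LpAddConst q * (headNorm q F t + tailNorm q F t) := by
  have hsplit : F =ᵐ[logMeasure] (Ioo 0 t).indicator F + (Ioi t).indicator F := by
    have hne : ∀ᵐ u ∂logMeasure, u ≠ t :=
      logMeasure_absolutelyContinuous.ae_le (ae_restrict_of_ae (Measure.ae_ne volume t))
    filter_upwards [ae_logMeasure_pos, hne] with u hu hut
    rcases hut.lt_or_gt with hlt | hgt
    · simp [hu, hlt, hlt.le]
    · simp [hgt, hgt.le]
  rw [eLpNorm_congr_ae hsplit, headNorm, tailNorm,
    ← eLpNorm_indicator_eq_eLpNorm_restrict measurableSet_Ioo,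
    ← eLpNorm_indicator_eq_eLpNorm_restrict measurableSet_Ioi]
  exact eLpNorm_add_le' (hF.indicator measurableSet_Ioo).aestronglyMeasurable
    (hF.indicator measurableSet_Ioi).aestronglyMeasurable q

theorem eLpNorm_logMeasure_restrict_mul_left (ht : 0 < t) (S : Set ℝ) :
    eLpNorm F q (logMeasure.restrict S) =
      eLpNorm (fun u => F (t * u)) q (logMeasure.restrict ((t * ·) ⁻¹' S)) := by
  have hemb : MeasurableEmbedding (t * · : ℝ → ℝ) :=
    (Homeomorph.mulLeft₀ t ht.ne').measurableEmbedding
  conv_lhs => rw [← map_mul_left_logMeasure ht]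
  rw [hemb.restrict_map, hemb.eLpNorm_map_measure]
  rfl

theorem headNorm_eq_headNorm_one (ht : 0 < t) :
    headNorm q F t = headNorm q (fun u => F (t * u)) 1 := by
  rw [headNorm, eLpNorm_logMeasure_restrict_mul_left ht, preimage_const_mul_Ioo₀ _ _ ht, zero_div,
    div_self ht.ne']
  rfl

theorem tailNorm_eq_tailNorm_one (ht : 0 < t) :
    tailNorm q F t = tailNorm q (fun u => F (t * u)) 1 := by
  rw [tailNorm, eLpNorm_logMeasure_restrict_mul_left ht, preimage_const_mul_Ioi₀ _ ht,
    div_self ht.ne']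
  rfl

theorem exists_le_headNorm_of_forall_le (hq : q ≠ 0) : ∃ C ≠ ∞, ∀ (F : ℝ → ℝ≥0∞) (t : ℝ) (c : ℝ≥0∞),
    0 < t → (∀ u, t / 2 ≤ u → u < t → c ≤ F u) → c ≤ C * headNorm q F t := by
  set m : ℝ≥0∞ := ENNReal.ofReal (Real.log 2) ^ (1 / q.toReal) with hm_def
  have hm : m ≠ 0 ∧ m ≠ ∞ := by
    constructor
    · simp [hm_def, Real.log_pos one_lt_two, ENNReal.rpow_eq_zero_iff]
    · exact ENNReal.rpow_ne_top_of_nonneg (by positivity) (by simp)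
  refine ⟨m⁻¹, ENNReal.inv_ne_top.2 hm.1, fun F t c ht hF => ?_⟩
  have hblock : logMeasure (Ico (t / 2) t) = ENNReal.ofReal (Real.log 2) := by
    rw [logMeasure_Ico (by positivity) ht]
    congr 2
    field_simp
  have hpos : logMeasure.restrict (Ico (t / 2) t) ≠ 0 := by
    rw [Ne, Measure.restrict_eq_zero, hblock]
    simp [Real.log_pos one_lt_two]
  have hsub : Ico (t / 2) t ⊆ Ioo 0 t := fun u hu => ⟨by linarith [hu.1], hu.2⟩
  have key : c * m ≤ headNorm q F t := calc
    c * m = eLpNorm (fun _ => c) q (logMeasure.restrict (Ico (t / 2) t)) := by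
        rw [eLpNorm_const _ hq hpos, Measure.restrict_apply_univ, hblock, enorm_eq_self]
    _ ≤ eLpNorm F q (logMeasure.restrict (Ico (t / 2) t)) :=
        eLpNorm_mono_enorm_ae (by
          filter_upwards [ae_restrict_mem measurableSet_Ico] with u hu
          simpa using hF u hu.1 hu.2)
    _ ≤ headNorm q F t := eLpNorm_mono_measure F (Measure.restrict_mono hsub le_rfl)
  calc c = m⁻¹ * (c * m) := by
        rw [mul_left_comm, ENNReal.inv_mul_cancel hm.1 hm.2, mul_one]
    _ ≤ m⁻¹ * headNorm q F t := by gcongr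

end HeadTail

/-! ### Weights of power growth -/

theorem ofReal_rpow_add {x : ℝ} (hx : 0 < x) (α β : ℝ) :
    ENNReal.ofReal (x ^ (α + β)) = ENNReal.ofReal (x ^ α) * ENNReal.ofReal (x ^ β) := by
  rw [Real.rpow_add hx, ENNReal.ofReal_mul (by positivity)]

/-- A weight on `(0, ∞)` that grows, up to constants, at least like `t ^ α` and at most like
`t ^ β`. The exponents stand in for the Matuszewska indices of the weight; only the values on
`(0, ∞)` matter. -/
structure IsWeight (α β : ℝ) (φ : ℝ → ℝ≥0∞) : Prop where
  aemeasurable : AEMeasurable φ logMeasure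
  ne_zero : ∀ t, 0 < t → φ t ≠ 0
  ne_top : ∀ t, 0 < t → φ t ≠ ∞
  lower : ∃ C ≠ ∞, ∀ s t, 0 < s → s ≤ t → φ s ≤ C * ENNReal.ofReal ((s / t) ^ α) * φ t
  upper : ∃ C ≠ ∞, ∀ s t, 0 < s → s ≤ t → φ t ≤ C * ENNReal.ofReal ((t / s) ^ β) * φ s

namespace IsWeight

variable {α β α' β' : ℝ} {φ ψ : ℝ → ℝ≥0∞} {q : ℝ≥0∞}

theorem congr (hφ : IsWeight α β φ) (h : ∀ t, 0 < t → φ t = ψ t) : IsWeight α β ψ where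
  aemeasurable := hφ.aemeasurable.congr
    (by filter_upwards [ae_logMeasure_pos] with t ht using h t ht)
  ne_zero t ht := h t ht ▸ hφ.ne_zero t ht
  ne_top t ht := h t ht ▸ hφ.ne_top t ht
  lower := by
    obtain ⟨C, hC, hle⟩ := hφ.lower
    exact ⟨C, hC, fun s t hs hst => by
      simpa only [h s hs, h t (hs.trans_le hst)] using hle s t hs hst⟩
  upper := by
    obtain ⟨C, hC, hle⟩ := hφ.upper
    exact ⟨C, hC, fun s t hs hst => by
      simpa only [h s hs, h t (hs.trans_le hst)] using hle s t hs hst⟩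

theorem mul (hφ : IsWeight α β φ) (hψ : IsWeight α' β' ψ) :
    IsWeight (α + α') (β + β') fun t => φ t * ψ t where
  aemeasurable := hφ.aemeasurable.mul hψ.aemeasurable
  ne_zero t ht := mul_ne_zero (hφ.ne_zero t ht) (hψ.ne_zero t ht)
  ne_top t ht := ENNReal.mul_ne_top (hφ.ne_top t ht) (hψ.ne_top t ht)
  lower := by
    obtain ⟨C, hC, hφ_le⟩ := hφ.lower
    obtain ⟨D, hD, hψ_le⟩ := hψ.lower
    refine ⟨C * D, by finiteness, fun s t hs hst => ?_⟩
    calc φ s * ψ s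
        ≤ C * ENNReal.ofReal ((s / t) ^ α) * φ t * (D * ENNReal.ofReal ((s / t) ^ α') * ψ t) :=
          mul_le_mul' (hφ_le s t hs hst) (hψ_le s t hs hst)
      _ = C * D * ENNReal.ofReal ((s / t) ^ (α + α')) * (φ t * ψ t) := by
          rw [ofReal_rpow_add (div_pos hs (hs.trans_le hst))]
          ring
  upper := by
    obtain ⟨C, hC, hφ_le⟩ := hφ.upper
    obtain ⟨D, hD, hψ_le⟩ := hψ.upper
    refine ⟨C * D, by finiteness, fun s t hs hst => ?_⟩
    calc φ t * ψ t
        ≤ C * ENNReal.ofReal ((t / s) ^ β) * φ s * (D * ENNReal.ofReal ((t / s) ^ β') * ψ s) :=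
          mul_le_mul' (hφ_le s t hs hst) (hψ_le s t hs hst)
      _ = C * D * ENNReal.ofReal ((t / s) ^ (β + β')) * (φ s * ψ s) := by
          rw [ofReal_rpow_add (div_pos (hs.trans_le hst) hs)]
          ring

theorem inv (hφ : IsWeight α β φ) : IsWeight (-β) (-α) fun t => (φ t)⁻¹ where
  aemeasurable := hφ.aemeasurable.inv
  ne_zero t ht := ENNReal.inv_ne_zero.2 (hφ.ne_top t ht)
  ne_top t ht := ENNReal.inv_ne_top.2 (hφ.ne_zero t ht)
  lower := by
    obtain ⟨C, hC, hle⟩ := hφ.upper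
    refine ⟨C, hC, fun s t hs hst => ?_⟩
    have ht : 0 < t := hs.trans_le hst
    rw [← div_eq_mul_inv, ENNReal.le_div_iff_mul_le (Or.inl (hφ.ne_zero t ht))
      (Or.inl (hφ.ne_top t ht)), ENNReal.inv_mul_le_iff (hφ.ne_zero s hs) (hφ.ne_top s hs),
      mul_comm, Real.rpow_neg (by positivity), ← Real.inv_rpow (by positivity), inv_div]
    exact hle s t hs hst
  upper := by
    obtain ⟨C, hC, hle⟩ := hφ.lower
    refine ⟨C, hC, fun s t hs hst => ?_⟩
    have ht : 0 < t := hs.trans_le hst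
    rw [← div_eq_mul_inv, ENNReal.le_div_iff_mul_le (Or.inl (hφ.ne_zero s hs))
      (Or.inl (hφ.ne_top s hs)), ENNReal.inv_mul_le_iff (hφ.ne_zero t ht) (hφ.ne_top t ht),
      mul_comm, Real.rpow_neg (by positivity), ← Real.inv_rpow (by positivity), inv_div]
    exact hle s t hs hst

end IsWeight

theorem isWeight_ofReal_rpow (γ : ℝ) : IsWeight γ γ fun t => ENNReal.ofReal (t ^ γ) where
  aemeasurable := (measurable_id.pow_const γ).ennreal_ofReal.aemeasurable
  ne_zero t ht := by
    simp only [ne_eq, ENNReal.ofReal_eq_zero, not_le]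
    positivity
  ne_top _ _ := ENNReal.ofReal_ne_top
  lower := ⟨1, ENNReal.one_ne_top, fun s t hs hst => by
    have ht : 0 < t := hs.trans_le hst
    rw [one_mul, ← ENNReal.ofReal_mul (by positivity), ← Real.mul_rpow (by positivity) ht.le,
      div_mul_cancel₀ _ ht.ne']⟩
  upper := ⟨1, ENNReal.one_ne_top, fun s t hs hst => by
    have ht : 0 < t := hs.trans_le hst
    rw [one_mul, ← ENNReal.ofReal_mul (by positivity), ← Real.mul_rpow (by positivity) hs.le,
      div_mul_cancel₀ _ hs.ne']⟩

theorem isWeight_ofReal : IsWeight 1 1 ENNReal.ofReal :=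
  (isWeight_ofReal_rpow 1).congr fun t _ => by rw [Real.rpow_one]

/-- The weight `u ^ (-θ) * a u` of the interpolation space `Ā_{θ,q;a}`, relative to `du / u`. -/
def powWeight (θ : ℝ) (a : ℝ → ℝ) (u : ℝ) : ℝ≥0∞ :=
  ENNReal.ofReal (u ^ (-θ) * a u)

theorem powWeight_zero (a : ℝ → ℝ) (u : ℝ) : powWeight 0 a u = ENNReal.ofReal (a u) := by
  simp [powWeight]

theorem powWeight_mul_ofReal {t : ℝ} (ht : 0 < t) (θ : ℝ) (a : ℝ → ℝ) :
    powWeight θ a t * ENNReal.ofReal t = ENNReal.ofReal (t ^ (1 - θ) * a t) := by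
  rw [powWeight, ← ENNReal.ofReal_mul' ht.le, sub_eq_neg_add, Real.rpow_add ht, Real.rpow_one,
    mul_right_comm]

theorem EquivOn.exists_le_of_monotoneOn {S : Set ℝ} {f g : ℝ → ℝ} (h : EquivOn S f g)
    (hg : MonotoneOn g S) : ∃ C : ℝ, 0 < C ∧ ∀ s ∈ S, ∀ t ∈ S, s ≤ t → f s ≤ C * f t := by
  obtain ⟨C, hC, hfg⟩ := h
  refine ⟨C * C, by positivity, fun s hs t ht hst => ?_⟩
  calc f s ≤ C * g s := (hfg s hs).2
    _ ≤ C * g t := by gcongr; exact hg hs ht hst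
    _ ≤ C * (C * f t) := by gcongr; exact (inv_mul_le_iff₀ hC).1 (hfg t ht).1
    _ = C * C * f t := by ring

theorem EquivOn.exists_le_of_antitoneOn {S : Set ℝ} {f g : ℝ → ℝ} (h : EquivOn S f g)
    (hg : AntitoneOn g S) : ∃ C : ℝ, 0 < C ∧ ∀ s ∈ S, ∀ t ∈ S, s ≤ t → f t ≤ C * f s := by
  obtain ⟨C, hC, hfg⟩ := h
  refine ⟨C * C, by positivity, fun s hs t ht hst => ?_⟩
  calc f t ≤ C * g t := (hfg t ht).2
    _ ≤ C * g s := by gcongr; exact hg hs ht hst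
    _ ≤ C * (C * f s) := by gcongr; exact (inv_mul_le_iff₀ hC).1 (hfg s hs).1
    _ = C * C * f s := by ring

theorem SlowlyVarying.isWeight_powWeight {a : ℝ → ℝ} (ha : SlowlyVarying a) {α β θ : ℝ}
    (hα : α < -θ) (hβ : -θ < β) : IsWeight α β (powWeight θ a) where
  aemeasurable := by
    have : AEMeasurable a logMeasure := ha.1.mono_ac logMeasure_absolutelyContinuous
    exact ((measurable_id.pow_const _).aemeasurable.mul this).ennreal_ofReal
  ne_zero t ht := by
    have : 0 < a t := ha.2.1 t ht
    simp only [powWeight, ne_eq, ENNReal.ofReal_eq_zero, not_le]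
    positivity
  ne_top _ _ := ENNReal.ofReal_ne_top
  lower := by
    obtain ⟨g, hg, hequiv⟩ := (ha.2.2 (-θ - α) (by linarith)).1
    obtain ⟨C, hC, hle⟩ := hequiv.exists_le_of_monotoneOn hg
    refine ⟨ENNReal.ofReal C, ENNReal.ofReal_ne_top, fun s t hs hst => ?_⟩
    have ht : 0 < t := hs.trans_le hst
    rw [powWeight, powWeight, ← ENNReal.ofReal_mul hC.le, ← ENNReal.ofReal_mul (by positivity)]
    refine ENNReal.ofReal_le_ofReal ?_
    calc s ^ (-θ) * a s = s ^ α * (s ^ (-θ - α) * a s) := by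
          rw [← mul_assoc, ← Real.rpow_add hs]
          ring_nf
      _ ≤ s ^ α * (C * (t ^ (-θ - α) * a t)) :=
          mul_le_mul_of_nonneg_left (hle s hs t ht hst) (by positivity)
      _ = C * (s / t) ^ α * (t ^ (-θ) * a t) := by
          rw [Real.rpow_sub ht, Real.div_rpow hs.le ht.le]
          ring
  upper := by
    obtain ⟨g, hg, hequiv⟩ := (ha.2.2 (θ + β) (by linarith)).2
    obtain ⟨C, hC, hle⟩ := hequiv.exists_le_of_antitoneOn hg
    refine ⟨ENNReal.ofReal C, ENNReal.ofReal_ne_top, fun s t hs hst => ?_⟩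
    have ht : 0 < t := hs.trans_le hst
    rw [powWeight, powWeight, ← ENNReal.ofReal_mul hC.le, ← ENNReal.ofReal_mul (by positivity)]
    refine ENNReal.ofReal_le_ofReal ?_
    calc t ^ (-θ) * a t = t ^ β * (t ^ (-(θ + β)) * a t) := by
          rw [← mul_assoc, ← Real.rpow_add ht]
          ring_nf
      _ ≤ t ^ β * (C * (s ^ (-(θ + β)) * a s)) :=
          mul_le_mul_of_nonneg_left (hle s hs t ht hst) (by positivity)
      _ = C * (t / s) ^ β * (s ^ (-θ) * a s) := by
          rw [neg_add, Real.rpow_add hs, Real.rpow_neg hs.le β, Real.div_rpow ht.le hs.le]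
          ring

theorem SlowlyVarying.isWeight_div {a b : ℝ → ℝ} (ha : SlowlyVarying a) (hb : SlowlyVarying b)
    {ε : ℝ} (hε : 0 < ε) : IsWeight (-ε) ε fun t => ENNReal.ofReal (b t / a t) := by
  have hwt : ∀ {c : ℝ → ℝ}, SlowlyVarying c → IsWeight (-(ε / 2)) (ε / 2) (powWeight 0 c) :=
    fun hc => hc.isWeight_powWeight (by linarith) (by linarith)
  have h := ((hwt hb).mul (hwt ha).inv).congr (ψ := fun t => ENNReal.ofReal (b t / a t))
    fun t ht => by
      rw [powWeight_zero, powWeight_zero, ENNReal.ofReal_div_of_pos (ha.2.1 t ht), div_eq_mul_inv]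
  convert h using 1 <;> ring

section Karamata

theorem eLpNorm_ofReal_rpow_ne_top {γ : ℝ} {S : Set ℝ} (hS : MeasurableSet S) (hS₀ : S ⊆ Ioi 0)
    (hle : ∀ u ∈ S, u ^ γ ≤ 1) (hint : ∀ p > 0, IntegrableOn (fun u => u ^ (γ * p - 1)) S)
    (q : ℝ≥0∞) :
    eLpNorm (fun u => ENNReal.ofReal (u ^ γ)) q (logMeasure.restrict S) ≠ ∞ := by
  rcases eq_or_ne q 0 with rfl | hq
  · simp
  rcases eq_or_ne q ∞ with rfl | hq_top
  · rw [eLpNorm_exponent_top]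
    refine ne_top_of_le_ne_top ENNReal.one_ne_top (eLpNormEssSup_le_of_ae_enorm_bound ?_)
    filter_upwards [ae_restrict_mem hS] with u hu
    simpa using hle u hu
  have hp : 0 < q.toReal := ENNReal.toReal_pos hq hq_top
  rw [eLpNorm_eq_lintegral_rpow_enorm_toReal hq hq_top, setLIntegral_logMeasure hS hS₀]
  refine ENNReal.rpow_ne_top_of_nonneg (by positivity) (ne_of_lt ?_)
  calc ∫⁻ u in S, ENNReal.ofReal u⁻¹ * ‖ENNReal.ofReal (u ^ γ)‖ₑ ^ q.toReal
      = ∫⁻ u in S, ENNReal.ofReal (u ^ (γ * q.toReal - 1)) := by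
        refine setLIntegral_congr_fun hS fun u hu => ?_
        have hu : 0 < u := hS₀ hu
        simp only [enorm_eq_self]
        rw [ENNReal.ofReal_rpow_of_nonneg (by positivity) hp.le, ← Real.rpow_mul hu.le,
          ← ENNReal.ofReal_mul (by positivity), Real.rpow_sub_one hu.ne', inv_mul_eq_div]
    _ < ∞ := (hint _ hp).setLIntegral_lt_top

theorem headNorm_ofReal_rpow_ne_top {γ : ℝ} (hγ : 0 < γ) (q : ℝ≥0∞) :
    headNorm q (fun u => ENNReal.ofReal (u ^ γ)) 1 ≠ ∞ :=
  eLpNorm_ofReal_rpow_ne_top measurableSet_Ioo (fun _ hu => hu.1)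
    (fun _ hu => Real.rpow_le_one hu.1.le hu.2.le hγ.le)
    (fun p hp => (intervalIntegral.integrableOn_Ioo_rpow_iff one_pos).2 (by nlinarith)) q

theorem tailNorm_ofReal_rpow_ne_top {γ : ℝ} (hγ : γ < 0) (q : ℝ≥0∞) :
    tailNorm q (fun u => ENNReal.ofReal (u ^ γ)) 1 ≠ ∞ :=
  eLpNorm_ofReal_rpow_ne_top measurableSet_Ioi (Ioi_subset_Ioi zero_le_one)
    (fun _ hu => Real.rpow_le_one_of_one_le_of_nonpos (le_of_lt hu) hγ.le)
    (fun p hp => integrableOn_Ioi_rpow_of_lt (by nlinarith) one_pos) q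

namespace IsWeight

variable {α β : ℝ} {φ : ℝ → ℝ≥0∞} {q : ℝ≥0∞}

theorem exists_headNorm_le (hφ : IsWeight α β φ) (hα : 0 < α) (q : ℝ≥0∞) :
    ∃ C ≠ ∞, ∀ t, 0 < t → headNorm q φ t ≤ C * φ t := by
  obtain ⟨C, hC, hle⟩ := hφ.lower
  have hP := headNorm_ofReal_rpow_ne_top hα q
  set P := headNorm q (fun u => ENNReal.ofReal (u ^ α)) 1
  refine ⟨C * P, by finiteness, fun t ht => ?_⟩
  have hCt : C * φ t ≠ ∞ := ENNReal.mul_ne_top hC (hφ.ne_top t ht)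
  calc headNorm q φ t = headNorm q (fun u => φ (t * u)) 1 := headNorm_eq_headNorm_one ht
    _ ≤ C * φ t * P := headNorm_le_const_mul hCt fun u hu hu₁ => by
        have h := hle (t * u) t (by positivity) (mul_le_of_le_one_right ht.le hu₁.le)
        rwa [mul_div_cancel_left₀ _ ht.ne', mul_right_comm] at h
    _ = C * P * φ t := by ring

theorem exists_tailNorm_mul_rpow_le (hφ : IsWeight α β φ) {η : ℝ} (hη : β + η < 0) (q : ℝ≥0∞) :
    ∃ C ≠ ∞, ∀ t, 0 < t →
      tailNorm q (fun u => φ u * ENNReal.ofReal ((u / t) ^ η)) t ≤ C * φ t := by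
  obtain ⟨C, hC, hle⟩ := hφ.upper
  have hP := tailNorm_ofReal_rpow_ne_top hη q
  set P := tailNorm q (fun u => ENNReal.ofReal (u ^ (β + η))) 1
  refine ⟨C * P, by finiteness, fun t ht => ?_⟩
  have hCt : C * φ t ≠ ∞ := ENNReal.mul_ne_top hC (hφ.ne_top t ht)
  calc tailNorm q (fun u => φ u * ENNReal.ofReal ((u / t) ^ η)) t
      = tailNorm q (fun u => φ (t * u) * ENNReal.ofReal ((t * u / t) ^ η)) 1 :=
        tailNorm_eq_tailNorm_one ht
    _ ≤ C * φ t * P := tailNorm_le_const_mul zero_le_one hCt fun u hu hu₁ => by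
        have h := hle t (t * u) ht (le_mul_of_one_le_right ht.le hu₁.le)
        rw [mul_div_cancel_left₀ _ ht.ne'] at h ⊢
        calc φ (t * u) * ENNReal.ofReal (u ^ η)
            ≤ C * ENNReal.ofReal (u ^ β) * φ t * ENNReal.ofReal (u ^ η) := by gcongr
          _ = C * φ t * ENNReal.ofReal (u ^ (β + η)) := by
              rw [ofReal_rpow_add hu]
              ring
    _ = C * P * φ t := by ring

theorem exists_tailNorm_le (hφ : IsWeight α β φ) (hβ : β < 0) (q : ℝ≥0∞) :
    ∃ C ≠ ∞, ∀ t, 0 < t → tailNorm q φ t ≤ C * φ t := by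
  simpa using hφ.exists_tailNorm_mul_rpow_le (η := 0) (by simpa using hβ) q

theorem exists_comparable (hφ : IsWeight α β φ) (r : ℝ) :
    ∃ C ≠ ∞, ∀ s t, 0 < s → s ≤ t → t ≤ r * s → φ s ≤ C * φ t ∧ φ t ≤ C * φ s := by
  obtain ⟨C, hC, hC_le⟩ := hφ.lower
  obtain ⟨D, hD, hD_le⟩ := hφ.upper
  refine ⟨C * ENNReal.ofReal (r ^ |α|) + D * ENNReal.ofReal (r ^ |β|), by finiteness,
    fun s t hs hst htr => ?_⟩
  have ht : 0 < t := hs.trans_le hst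
  have hx₁ : 1 ≤ t / s := (one_le_div hs).2 hst
  have hxr : t / s ≤ r := (div_le_iff₀ hs).2 htr
  have hpow : ∀ γ : ℝ, (t / s) ^ γ ≤ r ^ |γ| := fun γ =>
    (Real.rpow_le_rpow_of_exponent_le hx₁ (le_abs_self γ)).trans
      (Real.rpow_le_rpow (by positivity) hxr (abs_nonneg γ))
  have hα : (s / t) ^ α ≤ r ^ |α| := by
    have h := hpow (-α)
    rwa [Real.rpow_neg (by positivity), ← Real.inv_rpow (by positivity), inv_div, abs_neg] at h
  constructor
  · calc φ s ≤ C * ENNReal.ofReal ((s / t) ^ α) * φ t := hC_le s t hs hst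
      _ ≤ (C * ENNReal.ofReal (r ^ |α|) + D * ENNReal.ofReal (r ^ |β|)) * φ t := by
          gcongr
          exact le_add_right (by gcongr)
  · calc φ t ≤ D * ENNReal.ofReal ((t / s) ^ β) * φ s := hD_le s t hs hst
      _ ≤ (C * ENNReal.ofReal (r ^ |α|) + D * ENNReal.ofReal (r ^ |β|)) * φ s := by
          gcongr
          exact le_add_left (by gcongr; exact hpow β)

theorem exists_le_headNorm (hφ : IsWeight α β φ) (hq : q ≠ 0) :
    ∃ C ≠ ∞, ∀ t, 0 < t → φ t ≤ C * headNorm q φ t := by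
  obtain ⟨C, hC, hC_le⟩ := hφ.exists_comparable 2
  obtain ⟨D, hD, hD_le⟩ := exists_le_headNorm_of_forall_le hq
  refine ⟨D * C, by finiteness, fun t ht => ?_⟩
  calc φ t ≤ D * headNorm q (fun u => C * φ u) t := hD_le _ t _ ht fun u hu hut =>
        (hC_le u t (by linarith) hut.le (by linarith)).2
    _ ≤ D * (C * headNorm q φ t) := by
        gcongr
        exact headNorm_le_const_mul hC fun _ _ _ => le_rfl
    _ = D * C * headNorm q φ t := by ring

theorem headNorm (hφ : IsWeight α β φ) (hq : q ≠ 0) (hfin : headNorm q φ 1 ≠ ∞) :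
    IsWeight α β (headNorm q φ) := by
  obtain ⟨C, hC, hC_le⟩ := hφ.lower
  obtain ⟨D, hD, hD_le⟩ := hφ.upper
  have hupper : ∀ s t, 0 < s → s ≤ t →
      _root_.headNorm q φ t ≤ D * ENNReal.ofReal ((t / s) ^ β) * _root_.headNorm q φ s := by
    intro s t hs hst
    have ht : 0 < t := hs.trans_le hst
    rw [headNorm_eq_headNorm_one ht, headNorm_eq_headNorm_one hs]
    refine headNorm_le_const_mul (by finiteness) fun u hu _ => ?_
    have h := hD_le (s * u) (t * u) (by positivity) (by gcongr)
    rwa [mul_div_mul_right _ _ hu.ne'] at h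
  refine ⟨(headNorm_mono q φ).measurable.aemeasurable, fun t ht h0 => ?_, fun t _ => ?_,
    ⟨C, hC, fun s t hs hst => ?_⟩, ⟨D, hD, hupper⟩⟩
  · obtain ⟨B, -, hB_le⟩ := hφ.exists_le_headNorm hq
    exact hφ.ne_zero t ht (by simpa [h0] using hB_le t ht)
  · rcases le_total t 1 with h1 | h1
    · exact ne_top_of_le_ne_top hfin (headNorm_mono q φ h1)
    · exact ne_top_of_le_ne_top (by finiteness) (hupper 1 t one_pos h1)
  · have ht : 0 < t := hs.trans_le hst
    rw [headNorm_eq_headNorm_one ht, headNorm_eq_headNorm_one hs]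
    refine headNorm_le_const_mul (by finiteness) fun u hu _ => ?_
    have h := hC_le (s * u) (t * u) (by positivity) (by gcongr)
    rwa [mul_div_mul_right _ _ hu.ne'] at h

end IsWeight

end Karamata

/-! ### The K-functional of quasi-norms -/

section Kf

variable {G : Type*} [AddCommGroup G] {N₀ N₁ : G → ℝ≥0∞}

/-- A `[0, ∞]`-valued quasi-norm on an additive group, without definiteness; homogeneity is only
required for the scalar `-1`. -/
structure IsQuasiNorm (N : G → ℝ≥0∞) : Prop where
  zero : N 0 = 0
  neg : ∀ x, N (-x) = N x
  quasi : ∃ C ≠ ∞, ∀ x y, N (x + y) ≤ C * (N x + N y)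

theorem QuasiBanach.isQuasiNorm {F : Type*} [AddCommGroup F] [Module ℝ F] (A : QuasiBanach F) :
    IsQuasiNorm A.N where
  zero := A.zero
  neg x := by simpa using A.smul (-1) x
  quasi := let ⟨C, _, hC, hle⟩ := A.quasi; ⟨C, hC, hle⟩

theorem Kf_le (N₀ N₁ : G → ℝ≥0∞) (t : ℝ) (f g : G) :
    Kf N₀ N₁ t f ≤ N₀ g + ENNReal.ofReal t * N₁ (f - g) :=
  iInf_le _ g

theorem mul_Kf {c : ℝ≥0∞} (hc : c ≠ ∞) (t : ℝ) (f : G) :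
    c * Kf N₀ N₁ t f = ⨅ g, c * (N₀ g + ENNReal.ofReal t * N₁ (f - g)) :=
  ENNReal.mul_iInf fun h => absurd h hc

theorem Kf_mono (N₀ N₁ : G → ℝ≥0∞) (f : G) : Monotone fun t => Kf N₀ N₁ t f := fun _ _ hst =>
  iInf_mono fun _ => by gcongr

theorem Kf_le_left (h₁ : N₁ 0 = 0) (t : ℝ) (f : G) : Kf N₀ N₁ t f ≤ N₀ f := by
  simpa [h₁] using Kf_le N₀ N₁ t f f

theorem Kf_le_right (h₀ : N₀ 0 = 0) (t : ℝ) (f : G) :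
    Kf N₀ N₁ t f ≤ ENNReal.ofReal t * N₁ f := by
  simpa [h₀] using Kf_le N₀ N₁ t f 0

theorem Kf_neg (h₀ : ∀ x, N₀ (-x) = N₀ x) (h₁ : ∀ x, N₁ (-x) = N₁ x) (t : ℝ) (f : G) :
    Kf N₀ N₁ t (-f) = Kf N₀ N₁ t f := by
  refine (Equiv.neg G).iInf_congr fun g => ?_
  rw [Equiv.neg_apply, h₀, ← h₁ (-f - g)]
  congr 3
  abel

theorem Kf_le_div_mul_Kf {s t : ℝ} (hs : 0 < s) (hst : s ≤ t) (f : G) :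
    Kf N₀ N₁ t f ≤ ENNReal.ofReal (t / s) * Kf N₀ N₁ s f := by
  have h₁ : 1 ≤ t / s := (one_le_div hs).2 hst
  rw [mul_Kf ENNReal.ofReal_ne_top]
  refine iInf_mono fun g => ?_
  rw [mul_add, ← mul_assoc, ← ENNReal.ofReal_mul (by positivity), div_mul_cancel₀ _ hs.ne']
  gcongr
  exact le_mul_of_one_le_left zero_le (ENNReal.one_le_ofReal.2 h₁)

theorem exists_Kf_add_le (h₀ : IsQuasiNorm N₀) (h₁ : IsQuasiNorm N₁) :
    ∃ C ≠ ∞, ∀ t f g, Kf N₀ N₁ t (f + g) ≤ C * (Kf N₀ N₁ t f + Kf N₀ N₁ t g) := by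
  obtain ⟨C, hC, hC_le⟩ := h₀.quasi
  obtain ⟨D, hD, hD_le⟩ := h₁.quasi
  refine ⟨C + D, by finiteness, fun t f g => ?_⟩
  have hE : C + D ≠ ∞ := by finiteness
  rw [mul_add, mul_Kf hE, mul_Kf hE]
  refine ENNReal.le_iInf_add_iInf fun x y => (Kf_le N₀ N₁ t (f + g) (x + y)).trans ?_
  calc N₀ (x + y) + ENNReal.ofReal t * N₁ (f + g - (x + y))
      ≤ C * (N₀ x + N₀ y) + ENNReal.ofReal t * (D * (N₁ (f - x) + N₁ (g - y))) := by
        rw [add_sub_add_comm]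
        gcongr
        exacts [hC_le x y, hD_le _ _]
    _ ≤ (C + D) * (N₀ x + N₀ y) +
          ENNReal.ofReal t * ((C + D) * (N₁ (f - x) + N₁ (g - y))) := by
        gcongr
        exacts [le_self_add, le_add_self]
    _ = (C + D) * (N₀ x + ENNReal.ofReal t * N₁ (f - x)) +
          (C + D) * (N₀ y + ENNReal.ofReal t * N₁ (g - y)) := by ring

theorem LqNorm_congr {q : ℝ≥0∞} {s : Set ℝ} (hs : MeasurableSet s) {F F' : ℝ → ℝ≥0∞}
    (h : ∀ u ∈ s, F u = F' u) : LqNorm q s F = LqNorm q s F' := by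
  have hae : F =ᵐ[volume.restrict s] F' := ae_restrict_of_forall_mem hs h
  simp only [LqNorm, essSup_congr_ae hae, setLIntegral_congr_fun hs fun u hu =>
    congrArg (· ^ q.toReal) (h u hu)]

/-- The quasi-norm `‖w(u) K(u, f)‖` in `L_q (du / u)` of the interpolation space with an arbitrary
weight function `w`. -/
def weightNorm (N₀ N₁ : G → ℝ≥0∞) (w : ℝ → ℝ≥0∞) (q : ℝ≥0∞) (f : G) : ℝ≥0∞ :=
  eLpNorm (fun u => w u * Kf N₀ N₁ u f) q logMeasure

/-- The part over `(0, t)` of `weightNorm`, the inner quasi-norm of an `𝓛`-space. -/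
def weightHead (N₀ N₁ : G → ℝ≥0∞) (w : ℝ → ℝ≥0∞) (q : ℝ≥0∞) (f : G) (t : ℝ) : ℝ≥0∞ :=
  headNorm q (fun u => w u * Kf N₀ N₁ u f) t

theorem LqNorm_eq_eLpNorm_powWeight {q : ℝ≥0∞} (hq : q ≠ 0) {s : Set ℝ} (hs : MeasurableSet s)
    (hs₀ : s ⊆ Ioi 0) (θ : ℝ) (a : ℝ → ℝ) (F : ℝ → ℝ≥0∞) :
    LqNorm q s (fun u => ENNReal.ofReal (u ^ (-θ - q⁻¹.toReal) * a u) * F u) =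
      eLpNorm (fun u => powWeight θ a u * F u) q (logMeasure.restrict s) := by
  have hsplit : ∀ u ∈ s, ENNReal.ofReal (u ^ (-θ - q⁻¹.toReal) * a u) * F u =
      ENNReal.ofReal (u ^ (-q⁻¹.toReal)) * (powWeight θ a u * F u) := by
    intro u hu
    have hu : 0 < u := hs₀ hu
    rw [powWeight, ← mul_assoc, ← ENNReal.ofReal_mul (by positivity), ← mul_assoc (u ^ _),
      ← Real.rpow_add hu]
    ring_nf
  rw [← LqNorm_eq_eLpNorm_logMeasure hq hs hs₀]
  exact LqNorm_congr hs hsplit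

theorem logMeasure_restrict_Ioi_zero : logMeasure.restrict (Ioi 0) = logMeasure :=
  Measure.restrict_eq_self_of_ae_mem ae_logMeasure_pos

theorem normK_eq_weightNorm {q : ℝ≥0∞} (hq : q ≠ 0) (θ : ℝ) (b : ℝ → ℝ) :
    normK N₀ N₁ θ q b = weightNorm N₀ N₁ (powWeight θ b) q := by
  ext f
  rw [normK, LqNorm_eq_eLpNorm_powWeight hq measurableSet_Ioi subset_rfl,
    logMeasure_restrict_Ioi_zero, weightNorm]

theorem normL_eq_eLpNorm_weightHead {r q : ℝ≥0∞} (hr : r ≠ 0) (hq : q ≠ 0) (θ : ℝ) (b a : ℝ → ℝ)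
    (f : G) : normL N₀ N₁ θ r q b a f =
      eLpNorm (fun t => ENNReal.ofReal (b t / a t) * weightHead N₀ N₁ (powWeight θ a) q f t) r
        logMeasure := by
  have houter := LqNorm_eq_eLpNorm_powWeight hr measurableSet_Ioi subset_rfl 0
    (fun t => b t / a t) (weightHead N₀ N₁ (powWeight θ a) q f)
  simp only [neg_zero, zero_sub, powWeight_zero, logMeasure_restrict_Ioi_zero] at houter
  rw [← houter, normL]
  congr 1
  ext t
  rw [LqNorm_eq_eLpNorm_powWeight hq measurableSet_Ioo Ioo_subset_Ioi_self]
  rfl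

end Kf

/-! ### A Holmstedt-type estimate -/

/-- The supremum of `F` over `[t, ∞)`, damped by the power `(t / s) ^ ε`. -/
def tailSup (ε : ℝ) (F : ℝ → ℝ≥0∞) (t : ℝ) : ℝ≥0∞ :=
  ⨆ s ∈ Ici t, ENNReal.ofReal ((t / s) ^ ε) * F s

theorem mul_le_tailSup {t s : ℝ} (hts : t ≤ s) (ε : ℝ) (F : ℝ → ℝ≥0∞) :
    ENNReal.ofReal ((t / s) ^ ε) * F s ≤ tailSup ε F t :=
  le_iSup₂_of_le s hts le_rfl

theorem le_tailSup {t : ℝ} (ht : 0 < t) (ε : ℝ) (F : ℝ → ℝ≥0∞) : F t ≤ tailSup ε F t := by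
  simpa [div_self ht.ne'] using mul_le_tailSup (le_refl t) ε F

theorem le_rpow_mul_tailSup {t s : ℝ} (ht : 0 < t) (hts : t ≤ s) (ε : ℝ) (F : ℝ → ℝ≥0∞) :
    F s ≤ ENNReal.ofReal ((s / t) ^ ε) * tailSup ε F t := by
  have hs : 0 < s := ht.trans_le hts
  have hcancel : ENNReal.ofReal ((s / t) ^ ε) * ENNReal.ofReal ((t / s) ^ ε) = 1 := by
    rw [← ENNReal.ofReal_mul (by positivity), ← Real.mul_rpow (by positivity) (by positivity),
      div_mul_div_cancel₀ ht.ne', div_self hs.ne', Real.one_rpow, ENNReal.ofReal_one]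
  calc F s = ENNReal.ofReal ((s / t) ^ ε) * (ENNReal.ofReal ((t / s) ^ ε) * F s) := by
        rw [← mul_assoc, hcancel, one_mul]
    _ ≤ ENNReal.ofReal ((s / t) ^ ε) * tailSup ε F t := by
        gcongr
        exact mul_le_tailSup hts ε F

theorem tailSup_le_mul {ε t : ℝ} {F F' : ℝ → ℝ≥0∞} {c : ℝ≥0∞} (h : ∀ s, t ≤ s → F s ≤ c * F' s) :
    tailSup ε F t ≤ c * tailSup ε F' t :=
  iSup₂_le fun s hs => by
    calc ENNReal.ofReal ((t / s) ^ ε) * F s ≤ ENNReal.ofReal ((t / s) ^ ε) * (c * F' s) := by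
          gcongr
          exact h s hs
      _ = c * (ENNReal.ofReal ((t / s) ^ ε) * F' s) := by ring
      _ ≤ c * tailSup ε F' t := by
          gcongr
          exact mul_le_tailSup hs ε F'

theorem IsWeight.exists_mul_tailSup_le {α β : ℝ} {φ : ℝ → ℝ≥0∞} (hφ : IsWeight α β φ) (ε : ℝ) :
    ∃ C ≠ ∞, ∀ (F : ℝ → ℝ≥0∞) t, 0 < t →
      φ t * tailSup ε F t ≤ C * tailSup (ε + α) (fun s => φ s * F s) t := by
  obtain ⟨C, hC, hle⟩ := hφ.lower
  refine ⟨C, hC, fun F t ht => ?_⟩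
  simp only [tailSup, ENNReal.mul_iSup]
  refine iSup₂_le fun s hs => le_iSup₂_of_le s hs ?_
  calc φ t * (ENNReal.ofReal ((t / s) ^ ε) * F s)
      ≤ C * ENNReal.ofReal ((t / s) ^ α) * φ s * (ENNReal.ofReal ((t / s) ^ ε) * F s) := by
        gcongr
        exact hle t s ht hs
    _ = C * (ENNReal.ofReal ((t / s) ^ (ε + α)) * (φ s * F s)) := by
        rw [ofReal_rpow_add (div_pos ht (ht.trans_le hs))]
        ring

section Holmstedt

variable {G : Type*} [AddCommGroup G] {N₀ N₁ N : G → ℝ≥0∞} {w ρ : ℝ → ℝ≥0∞}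
  {α β γ δ η : ℝ} {q : ℝ≥0∞}

theorem aemeasurable_mul_Kf (hw : AEMeasurable w logMeasure) (f : G) :
    AEMeasurable (fun u => w u * Kf N₀ N₁ u f) logMeasure :=
  hw.mul (Kf_mono N₀ N₁ f).measurable.aemeasurable

theorem exists_mul_Kf_le_weightHead (hw : IsWeight α β w) (hq : q ≠ 0) :
    ∃ C ≠ ∞, ∀ (f : G) t, 0 < t → w t * Kf N₀ N₁ t f ≤ C * weightHead N₀ N₁ w q f t := by
  obtain ⟨C, hC, hC_le⟩ := hw.exists_comparable 2
  obtain ⟨D, hD, hD_le⟩ := exists_le_headNorm_of_forall_le hq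
  refine ⟨D * (C * 2), by finiteness, fun f t ht => ?_⟩
  have hblock : ∀ u, t / 2 ≤ u → u < t →
      w t * Kf N₀ N₁ t f ≤ C * 2 * (w u * Kf N₀ N₁ u f) := by
    intro u hu hut
    have hu₀ : 0 < u := by linarith
    calc w t * Kf N₀ N₁ t f
        ≤ C * w u * (ENNReal.ofReal (t / u) * Kf N₀ N₁ u f) := by
          gcongr
          · exact (hC_le u t hu₀ hut.le (by linarith)).2
          · exact Kf_le_div_mul_Kf hu₀ hut.le f
      _ ≤ C * w u * (2 * Kf N₀ N₁ u f) := by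
          gcongr
          rw [← ENNReal.ofReal_ofNat]
          exact ENNReal.ofReal_le_ofReal ((div_le_iff₀ hu₀).2 (by linarith))
      _ = C * 2 * (w u * Kf N₀ N₁ u f) := by ring
  calc w t * Kf N₀ N₁ t f
      ≤ D * headNorm q (fun u => C * 2 * (w u * Kf N₀ N₁ u f)) t := hD_le _ t _ ht hblock
    _ ≤ D * (C * 2 * weightHead N₀ N₁ w q f t) := by
        gcongr
        exact headNorm_le_const_mul (by finiteness) fun _ _ _ => le_rfl
    _ = D * (C * 2) * weightHead N₀ N₁ w q f t := by ring

theorem exists_weightHead_le_add (h₀ : IsQuasiNorm N₀) (h₁ : IsQuasiNorm N₁)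
    (hw : AEMeasurable w logMeasure)
    (hK : ∃ C ≠ ∞, ∀ t, 0 < t → ∀ h, Kf N₀ N₁ t h ≤ C * (ρ t * N h))
    (hwρ : IsWeight γ δ fun t => w t * ρ t) (hγ : 0 < γ) (q : ℝ≥0∞) :
    ∃ C ≠ ∞, ∀ (f g : G) t, 0 < t →
      weightHead N₀ N₁ w q f t ≤ C * (weightHead N₀ N₁ w q g t + w t * ρ t * N (f - g)) := by
  obtain ⟨A, hA, hA_le⟩ := hK
  obtain ⟨B, hB, hB_le⟩ := exists_Kf_add_le h₀ h₁
  obtain ⟨D, hD, hD_le⟩ := hwρ.exists_headNorm_le hγ q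
  have hL : LpAddConst q ≠ ∞ := (LpAddConst_lt_top q).ne
  set E := LpAddConst q * B * (1 + A * D)
  refine ⟨E, by finiteness, fun f g t ht => ?_⟩
  set F₁ : ℝ → ℝ≥0∞ := fun u => w u * Kf N₀ N₁ u g
  set F₂ : ℝ → ℝ≥0∞ := fun u => w u * Kf N₀ N₁ u (f - g)
  have hF₂ : headNorm q F₂ t ≤ A * D * (w t * ρ t * N (f - g)) := calc
    headNorm q F₂ t ≤ A * N (f - g) * headNorm q (fun u => w u * ρ u) t :=
        headNorm_le_mul_const hwρ.aemeasurable fun u hu _ => by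
          calc w u * Kf N₀ N₁ u (f - g) ≤ w u * (A * (ρ u * N (f - g))) := by
                gcongr
                exact hA_le u hu _
            _ = w u * ρ u * (A * N (f - g)) := by ring
    _ ≤ A * N (f - g) * (D * (w t * ρ t)) := by
        gcongr
        exact hD_le t ht
    _ = A * D * (w t * ρ t * N (f - g)) := by ring
  calc weightHead N₀ N₁ w q f t ≤ B * headNorm q (F₁ + F₂) t :=
        headNorm_le_const_mul hB fun u _ _ => by
          calc w u * Kf N₀ N₁ u f = w u * Kf N₀ N₁ u (g + (f - g)) := by rw [add_sub_cancel]
            _ ≤ w u * (B * (Kf N₀ N₁ u g + Kf N₀ N₁ u (f - g))) := by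
                gcongr
                exact hB_le _ _ _
            _ = B * (F₁ u + F₂ u) := by ring
    _ ≤ B * (LpAddConst q * (weightHead N₀ N₁ w q g t + headNorm q F₂ t)) := by
        gcongr
        exact headNorm_add_le (aemeasurable_mul_Kf hw _) (aemeasurable_mul_Kf hw _)
    _ ≤ B * (LpAddConst q * ((1 + A * D) * weightHead N₀ N₁ w q g t +
          (1 + A * D) * (w t * ρ t * N (f - g)))) := by
        gcongr
        · exact le_mul_of_one_le_left zero_le le_self_add
        · exact hF₂.trans (by gcongr; exact le_add_self)
    _ = E * (weightHead N₀ N₁ w q g t + w t * ρ t * N (f - g)) := by ring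

theorem exists_weightNorm_le_add (h₀ : IsQuasiNorm N₀) (h₁ : IsQuasiNorm N₁)
    (hw : IsWeight α β w) (hα : -1 < α) (hβ : β < 0) (q : ℝ≥0∞) :
    ∃ C ≠ ∞, ∀ (f g : G) t, 0 < t → weightNorm N₀ N₁ w q g ≤
      C * (weightHead N₀ N₁ w q f t + w t * (N₀ g + ENNReal.ofReal t * N₁ (f - g))) := by
  obtain ⟨A, hA, hA_le⟩ := exists_weightHead_le_add (ρ := ENNReal.ofReal) (N := N₁) h₀ h₁
    hw.aemeasurable ⟨1, ENNReal.one_ne_top, fun t _ h => by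
      rw [one_mul]
      exact Kf_le_right h₀.zero t h⟩ (hw.mul isWeight_ofReal) (by linarith) q
  obtain ⟨B, hB, hB_le⟩ := hw.exists_tailNorm_le hβ q
  have hL : LpAddConst q ≠ ∞ := (LpAddConst_lt_top q).ne
  refine ⟨LpAddConst q * (A + B), by finiteness, fun f g t ht => ?_⟩
  have htail : tailNorm q (fun u => w u * Kf N₀ N₁ u g) t ≤ B * (w t * N₀ g) := calc
    tailNorm q (fun u => w u * Kf N₀ N₁ u g) t ≤ N₀ g * tailNorm q w t :=
        tailNorm_le_mul_const ht.le hw.aemeasurable fun u _ _ => by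
          gcongr
          exact Kf_le_left h₁.zero u g
    _ ≤ N₀ g * (B * w t) := by
        gcongr
        exact hB_le t ht
    _ = B * (w t * N₀ g) := by ring
  have hhead : weightHead N₀ N₁ w q g t ≤
      A * (weightHead N₀ N₁ w q f t + w t * ENNReal.ofReal t * N₁ (f - g)) := by
    rw [← h₁.neg, neg_sub]
    exact hA_le g f t ht
  calc weightNorm N₀ N₁ w q g
      ≤ LpAddConst q * (weightHead N₀ N₁ w q g t + tailNorm q (fun u => w u * Kf N₀ N₁ u g) t) :=
        eLpNorm_logMeasure_le_headNorm_add_tailNorm (aemeasurable_mul_Kf hw.aemeasurable g) t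
    _ ≤ LpAddConst q *
          ((A + B) * (weightHead N₀ N₁ w q f t + w t * ENNReal.ofReal t * N₁ (f - g)) +
            (A + B) * (w t * N₀ g)) := by
        gcongr
        · exact hhead.trans (by gcongr; exact le_self_add)
        · exact htail.trans (by gcongr; exact le_add_self)
    _ = LpAddConst q * (A + B) *
          (weightHead N₀ N₁ w q f t + w t * (N₀ g + ENNReal.ofReal t * N₁ (f - g))) := by ring

/-- `N` is the quasi-norm of an interpolation space of the couple `(N₀, N₁)` with characteristic
function `ρ` that can serve as the second space in Holmstedt's formula: `mul_le` bounds the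
`N`-part of any decomposition of `f`, up to the values of the K-functional on `[t, ∞)` damped by
the exponent `η`. -/
structure IsUpperEndpoint (N₀ N₁ N : G → ℝ≥0∞) (ρ : ℝ → ℝ≥0∞) (η : ℝ) : Prop where
  Kf_le_mul : ∃ C ≠ ∞, ∀ t, 0 < t → ∀ h, Kf N₀ N₁ t h ≤ C * (ρ t * N h)
  mul_le : ∃ C ≠ ∞, ∀ f g t, 0 < t → ρ t * N (f - g) ≤
    C * (N₀ g + ENNReal.ofReal t * N₁ (f - g) + tailSup η (fun u => Kf N₀ N₁ u f) t)

namespace IsUpperEndpoint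

variable {σ : ℝ → ℝ}

theorem exists_weightHead_le_Kf (hN : IsUpperEndpoint N₀ N₁ N ρ η) (h₀ : IsQuasiNorm N₀)
    (h₁ : IsQuasiNorm N₁) (hw : AEMeasurable w logMeasure)
    (hwρ : IsWeight γ δ fun t => w t * ρ t) (hγ : 0 < γ)
    (hσ : ∃ C ≠ ∞, ∀ t, 0 < t → w t * ρ t ≤ C * ENNReal.ofReal (σ t)) (q : ℝ≥0∞) :
    ∃ C ≠ ∞, ∀ (f : G) t, 0 < t →
      weightHead N₀ N₁ w q f t ≤ C * Kf (weightNorm N₀ N₁ w q) N (σ t) f := by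
  obtain ⟨A, hA, hA_le⟩ := exists_weightHead_le_add h₀ h₁ hw hN.Kf_le_mul hwρ hγ q
  obtain ⟨B, hB, hB_le⟩ := hσ
  refine ⟨A * (1 + B), by finiteness, fun f t ht => ?_⟩
  rw [mul_Kf (by finiteness)]
  refine le_iInf fun g => (hA_le f g t ht).trans ?_
  calc A * (weightHead N₀ N₁ w q g t + w t * ρ t * N (f - g))
      ≤ A * ((1 + B) * weightNorm N₀ N₁ w q g +
          (1 + B) * ENNReal.ofReal (σ t) * N (f - g)) := by
        gcongr _ * (?_ + ?_ * _)
        · exact (headNorm_le_eLpNorm q _ t).trans (le_mul_of_one_le_left zero_le le_self_add)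
        · exact (hB_le t ht).trans (by gcongr; exact le_add_self)
    _ = A * (1 + B) * (weightNorm N₀ N₁ w q g + ENNReal.ofReal (σ t) * N (f - g)) := by ring

theorem exists_Kf_le_add_tailSup (hN : IsUpperEndpoint N₀ N₁ N ρ η) (h₀ : IsQuasiNorm N₀)
    (h₁ : IsQuasiNorm N₁) (hw : IsWeight α β w) (hα : -1 < α) (hβ : β < 0)
    (hσ : ∃ C ≠ ∞, ∀ t, 0 < t → ENNReal.ofReal (σ t) ≤ C * (w t * ρ t)) (q : ℝ≥0∞) :
    ∃ C ≠ ∞, ∀ (f : G) t, 0 < t → Kf (weightNorm N₀ N₁ w q) N (σ t) f ≤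
      C * (weightHead N₀ N₁ w q f t + w t * tailSup η (fun u => Kf N₀ N₁ u f) t) := by
  obtain ⟨A, hA, hA_le⟩ := exists_weightNorm_le_add h₀ h₁ hw hα hβ q
  obtain ⟨B, hB, hB_le⟩ := hσ
  obtain ⟨D, hD, hD_le⟩ := hN.mul_le
  set E := A + B * D
  refine ⟨E * 2, by finiteness, fun f t ht => ?_⟩
  set J := weightHead N₀ N₁ w q f t
  set T := tailSup η (fun u => Kf N₀ N₁ u f) t
  have hdecomp : ∀ g, Kf (weightNorm N₀ N₁ w q) N (σ t) f ≤
      E * (J + w t * T + w t * (N₀ g + ENNReal.ofReal t * N₁ (f - g))) := fun g => by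
    set X := N₀ g + ENNReal.ofReal t * N₁ (f - g)
    calc Kf (weightNorm N₀ N₁ w q) N (σ t) f
        ≤ weightNorm N₀ N₁ w q g + ENNReal.ofReal (σ t) * N (f - g) := Kf_le _ _ _ _ _
      _ ≤ A * (J + w t * X) + B * (w t * ρ t) * N (f - g) := by
          gcongr
          exacts [hA_le f g t ht, hB_le t ht]
      _ = A * (J + w t * X) + B * w t * (ρ t * N (f - g)) := by ring
      _ ≤ A * (J + w t * X) + B * w t * (D * (X + T)) := by
          gcongr _ + _ * ?_
          exact hD_le f g t ht
      _ = A * (J + w t * X) + B * D * (w t * T + w t * X) := by ring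
      _ ≤ A * (J + w t * T + w t * X) + B * D * (J + w t * T + w t * X) := by
          gcongr
          exacts [le_self_add, le_add_self]
      _ = E * (J + w t * T + w t * X) := by ring
  have hKf : Kf (weightNorm N₀ N₁ w q) N (σ t) f ≤ E * (J + w t * T + w t * Kf N₀ N₁ t f) := by
    rw [Kf.eq_def N₀, ENNReal.mul_iInf fun h => absurd h (hw.ne_top t ht), ENNReal.add_iInf,
      ENNReal.mul_iInf fun h => absurd h (by finiteness)]
    exact le_iInf hdecomp
  calc Kf (weightNorm N₀ N₁ w q) N (σ t) f ≤ E * (J + w t * T + w t * T) := by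
        refine hKf.trans ?_
        gcongr
        exact le_tailSup ht η fun u => Kf N₀ N₁ u f
    _ ≤ E * 2 * (J + w t * T) := by
        rw [mul_assoc, two_mul]
        gcongr
        exact le_add_self

theorem exists_Kf_le_tailSup_weightHead (hN : IsUpperEndpoint N₀ N₁ N ρ η) (h₀ : IsQuasiNorm N₀)
    (h₁ : IsQuasiNorm N₁) (hw : IsWeight α β w) (hα : -1 < α) (hβ : β < 0) (hq : q ≠ 0)
    (hσ : ∃ C ≠ ∞, ∀ t, 0 < t → ENNReal.ofReal (σ t) ≤ C * (w t * ρ t)) :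
    ∃ C ≠ ∞, ∀ (f : G) t, 0 < t → Kf (weightNorm N₀ N₁ w q) N (σ t) f ≤
      C * tailSup (η + α) (weightHead N₀ N₁ w q f) t := by
  obtain ⟨A, hA, hA_le⟩ := hN.exists_Kf_le_add_tailSup h₀ h₁ hw hα hβ hσ q
  obtain ⟨B, hB, hB_le⟩ := hw.exists_mul_tailSup_le η
  obtain ⟨D, hD, hD_le⟩ := exists_mul_Kf_le_weightHead (N₀ := N₀) (N₁ := N₁) hw hq
  refine ⟨A * (1 + B * D), by finiteness, fun f t ht => (hA_le f t ht).trans ?_⟩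
  set J := weightHead N₀ N₁ w q f
  have htail : w t * tailSup η (fun u => Kf N₀ N₁ u f) t ≤ B * (D * tailSup (η + α) J t) :=
    (hB_le _ t ht).trans
      (by gcongr; exact tailSup_le_mul fun s hs => hD_le f s (ht.trans_le hs))
  calc A * (J t + w t * tailSup η (fun u => Kf N₀ N₁ u f) t)
      ≤ A * (tailSup (η + α) J t + B * (D * tailSup (η + α) J t)) := by
        gcongr
        exact le_tailSup ht _ J
    _ = A * (1 + B * D) * tailSup (η + α) J t := by ring

end IsUpperEndpoint

theorem isUpperEndpoint_right (h₀ : N₀ 0 = 0) (η : ℝ) :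
    IsUpperEndpoint N₀ N₁ N₁ ENNReal.ofReal η where
  Kf_le_mul := ⟨1, ENNReal.one_ne_top, fun t _ h => by
    rw [one_mul]
    exact Kf_le_right h₀ t h⟩
  mul_le := ⟨1, ENNReal.one_ne_top, fun f g t _ => by
    rw [one_mul]
    exact le_add_right le_add_self⟩

theorem headNorm_mul_Kf_le {t : ℝ} (ht : 0 < t) (h : G) :
    headNorm q (fun u => ENNReal.ofReal u * w u) t * Kf N₀ N₁ t h ≤
      ENNReal.ofReal t * weightNorm N₀ N₁ w q h := by
  have hpointwise : ∀ u ∈ Ioo 0 t, Kf N₀ N₁ t h * (ENNReal.ofReal u * w u) ≤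
      ENNReal.ofReal t * (w u * Kf N₀ N₁ u h) := by
    intro u hu
    have hu₀ : 0 < u := hu.1
    calc Kf N₀ N₁ t h * (ENNReal.ofReal u * w u)
        ≤ ENNReal.ofReal (t / u) * Kf N₀ N₁ u h * (ENNReal.ofReal u * w u) := by
          gcongr
          exact Kf_le_div_mul_Kf hu₀ hu.2.le h
      _ = ENNReal.ofReal (t / u) * ENNReal.ofReal u * (w u * Kf N₀ N₁ u h) := by ring
      _ = ENNReal.ofReal t * (w u * Kf N₀ N₁ u h) := by
          rw [← ENNReal.ofReal_mul (by positivity), div_mul_cancel₀ _ hu₀.ne']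
  rw [mul_comm]
  calc Kf N₀ N₁ t h * headNorm q (fun u => ENNReal.ofReal u * w u) t
      ≤ headNorm q (fun u => ENNReal.ofReal t * (w u * Kf N₀ N₁ u h)) t :=
        const_mul_eLpNorm_le (by
          filter_upwards [ae_restrict_mem measurableSet_Ioo] with u hu using hpointwise u hu) q
    _ ≤ ENNReal.ofReal t * headNorm q (fun u => w u * Kf N₀ N₁ u h) t :=
        headNorm_le_const_mul ENNReal.ofReal_ne_top fun _ _ _ => le_rfl
    _ ≤ ENNReal.ofReal t * weightNorm N₀ N₁ w q h := by
        gcongr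
        exact headNorm_le_eLpNorm q _ t

theorem exists_tailNorm_mul_Kf_sub_le (h₀ : IsQuasiNorm N₀) (h₁ : IsQuasiNorm N₁)
    (hw : IsWeight α β w) (hη₀ : 0 ≤ η) (hη : β + η < 0) (q : ℝ≥0∞) :
    ∃ C ≠ ∞, ∀ (f g : G) t, 0 < t → tailNorm q (fun u => w u * Kf N₀ N₁ u (f - g)) t ≤
      C * (w t * (N₀ g + tailSup η (fun u => Kf N₀ N₁ u f) t)) := by
  obtain ⟨A, hA, hA_le⟩ := exists_Kf_add_le h₀ h₁
  obtain ⟨B, hB, hB_le⟩ := hw.exists_tailNorm_mul_rpow_le hη q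
  refine ⟨A * B, by finiteness, fun f g t ht => ?_⟩
  set X := N₀ g + tailSup η (fun u => Kf N₀ N₁ u f) t
  have hX : ∀ u, t < u → Kf N₀ N₁ u (f - g) ≤ A * (ENNReal.ofReal ((u / t) ^ η) * X) := by
    intro u hu
    have hone : 1 ≤ ENNReal.ofReal ((u / t) ^ η) :=
      ENNReal.one_le_ofReal.2 (Real.one_le_rpow ((one_le_div ht).2 hu.le) hη₀)
    calc Kf N₀ N₁ u (f - g) ≤ A * (Kf N₀ N₁ u f + Kf N₀ N₁ u g) := by
          rw [sub_eq_add_neg, ← Kf_neg h₀.neg h₁.neg u g]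
          exact hA_le u f (-g)
      _ ≤ A * (ENNReal.ofReal ((u / t) ^ η) * tailSup η (fun u => Kf N₀ N₁ u f) t +
            ENNReal.ofReal ((u / t) ^ η) * N₀ g) := by
          gcongr
          · exact le_rpow_mul_tailSup ht hu.le η fun u => Kf N₀ N₁ u f
          · exact (Kf_le_left h₁.zero u g).trans (le_mul_of_one_le_left zero_le hone)
      _ = A * (ENNReal.ofReal ((u / t) ^ η) * X) := by ring
  have hmeas : AEMeasurable (fun u => w u * ENNReal.ofReal ((u / t) ^ η)) logMeasure :=
    hw.aemeasurable.mul ((measurable_id.div_const t).pow_const η).ennreal_ofReal.aemeasurable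
  calc tailNorm q (fun u => w u * Kf N₀ N₁ u (f - g)) t
      ≤ A * X * tailNorm q (fun u => w u * ENNReal.ofReal ((u / t) ^ η)) t :=
        tailNorm_le_mul_const ht.le hmeas fun u _ hu => by
          calc w u * Kf N₀ N₁ u (f - g) ≤ w u * (A * (ENNReal.ofReal ((u / t) ^ η) * X)) := by
                gcongr
                exact hX u hu
            _ = w u * ENNReal.ofReal ((u / t) ^ η) * (A * X) := by ring
    _ ≤ A * X * (B * w t) := by
        gcongr
        exact hB_le t ht
    _ = A * B * (w t * X) := by ring

/-- The characteristic function `t / ‖u w(u)‖_{q,(0,t)}` of the space with quasi-norm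
`weightNorm N₀ N₁ w q`. -/
def charWeight (w : ℝ → ℝ≥0∞) (q : ℝ≥0∞) (t : ℝ) : ℝ≥0∞ :=
  ENNReal.ofReal t * (headNorm q (fun u => ENNReal.ofReal u * w u) t)⁻¹

theorem exists_weightNorm_sub_le (h₀ : IsQuasiNorm N₀) (h₁ : IsQuasiNorm N₁)
    (hw : IsWeight α β w) (hη₀ : 0 ≤ η) (hη : β + η < 0) (q : ℝ≥0∞) :
    ∃ C ≠ ∞, ∀ (f g : G) t, 0 < t → weightNorm N₀ N₁ w q (f - g) ≤
      C * (headNorm q (fun u => ENNReal.ofReal u * w u) t * N₁ (f - g) +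
        w t * (N₀ g + tailSup η (fun u => Kf N₀ N₁ u f) t)) := by
  obtain ⟨A, hA, hA_le⟩ := exists_tailNorm_mul_Kf_sub_le h₀ h₁ hw hη₀ hη q
  have hL : LpAddConst q ≠ ∞ := (LpAddConst_lt_top q).ne
  refine ⟨LpAddConst q * (1 + A), by finiteness, fun f g t ht => ?_⟩
  set B := headNorm q (fun u => ENNReal.ofReal u * w u) t
  set X := N₀ g + tailSup η (fun u => Kf N₀ N₁ u f) t
  have hhead : weightHead N₀ N₁ w q (f - g) t ≤ N₁ (f - g) * B :=
    headNorm_le_mul_const (isWeight_ofReal.aemeasurable.mul hw.aemeasurable) fun u _ _ => by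
      calc w u * Kf N₀ N₁ u (f - g) ≤ w u * (ENNReal.ofReal u * N₁ (f - g)) := by
            gcongr
            exact Kf_le_right h₀.zero u _
        _ = ENNReal.ofReal u * w u * N₁ (f - g) := by ring
  calc weightNorm N₀ N₁ w q (f - g)
      ≤ LpAddConst q * (weightHead N₀ N₁ w q (f - g) t +
          tailNorm q (fun u => w u * Kf N₀ N₁ u (f - g)) t) :=
        eLpNorm_logMeasure_le_headNorm_add_tailNorm (aemeasurable_mul_Kf hw.aemeasurable _) t
    _ ≤ LpAddConst q * (1 * (N₁ (f - g) * B) + A * (w t * X)) := by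
        rw [one_mul]
        gcongr
        exact hA_le f g t ht
    _ ≤ LpAddConst q * ((1 + A) * (N₁ (f - g) * B) + (1 + A) * (w t * X)) := by
        gcongr
        exacts [le_self_add, le_add_self]
    _ = LpAddConst q * (1 + A) * (B * N₁ (f - g) + w t * X) := by ring

theorem isUpperEndpoint_weightNorm (h₀ : IsQuasiNorm N₀) (h₁ : IsQuasiNorm N₁)
    (hw : IsWeight α β w) (hη₀ : 0 ≤ η) (hη : β + η < 0) (hq : q ≠ 0)
    (hfin : headNorm q (fun u => ENNReal.ofReal u * w u) 1 ≠ ∞) :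
    IsUpperEndpoint N₀ N₁ (weightNorm N₀ N₁ w q) (charWeight w q) η := by
  have hφ : IsWeight (1 + α) (1 + β) fun u => ENNReal.ofReal u * w u := isWeight_ofReal.mul hw
  have hB := hφ.headNorm hq hfin
  set B := headNorm q fun u => ENNReal.ofReal u * w u
  obtain ⟨A, hA, hA_le⟩ := exists_weightNorm_sub_le h₀ h₁ hw hη₀ hη q
  obtain ⟨D, hD, hD_le⟩ := hφ.exists_le_headNorm hq
  have hcancel : ∀ t, 0 < t → (B t)⁻¹ * B t = 1 := fun t ht =>
    ENNReal.inv_mul_cancel (hB.ne_zero t ht) (hB.ne_top t ht)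
  refine ⟨⟨1, ENNReal.one_ne_top, fun t ht h => ?_⟩,
    ⟨A * (1 + D), by finiteness, fun f g t ht => ?_⟩⟩
  · calc Kf N₀ N₁ t h = (B t)⁻¹ * (B t * Kf N₀ N₁ t h) := by
          rw [← mul_assoc, hcancel t ht, one_mul]
      _ ≤ (B t)⁻¹ * (ENNReal.ofReal t * weightNorm N₀ N₁ w q h) := by
          gcongr _ * ?_
          exact headNorm_mul_Kf_le ht h
      _ = 1 * (charWeight w q t * weightNorm N₀ N₁ w q h) := by
          rw [charWeight]
          ring
  · set T := tailSup η (fun u => Kf N₀ N₁ u f) t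
    set X := N₀ g + ENNReal.ofReal t * N₁ (f - g) + T
    have hρw : (B t)⁻¹ * (ENNReal.ofReal t * w t) ≤ D := calc
      (B t)⁻¹ * (ENNReal.ofReal t * w t) ≤ (B t)⁻¹ * (D * B t) := by
          gcongr _ * ?_
          exact hD_le t ht
      _ = D * ((B t)⁻¹ * B t) := by ring
      _ = D := by rw [hcancel t ht, mul_one]
    calc charWeight w q t * weightNorm N₀ N₁ w q (f - g)
        ≤ ENNReal.ofReal t * (B t)⁻¹ * (A * (B t * N₁ (f - g) + w t * (N₀ g + T))) := by
          rw [charWeight]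
          gcongr
          exact hA_le f g t ht
      _ = A * ((B t)⁻¹ * B t * (ENNReal.ofReal t * N₁ (f - g)) +
            (B t)⁻¹ * (ENNReal.ofReal t * w t) * (N₀ g + T)) := by ring
      _ ≤ A * (1 * X + D * X) := by
          rw [hcancel t ht]
          gcongr
          · exact le_add_right le_add_self
          · exact add_le_add_left le_self_add T
      _ = A * (1 + D) * X := by ring

theorem isWeight_charWeight (hw : IsWeight α β w) (hq : q ≠ 0)
    (hfin : headNorm q (fun u => ENNReal.ofReal u * w u) 1 ≠ ∞) :
    IsWeight (-β) (-α) (charWeight w q) := by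
  have hφ : IsWeight (1 + α) (1 + β) fun u => ENNReal.ofReal u * w u := isWeight_ofReal.mul hw
  have h := isWeight_ofReal.mul (hφ.headNorm hq hfin).inv
  rwa [← sub_eq_add_neg, ← sub_eq_add_neg, sub_add_cancel_left, sub_add_cancel_left] at h

end Holmstedt

/-! ### Discretization -/

section Discretization

variable {r : ℝ≥0∞}

theorem measure_le_of_singleton_le {ι : Type*} [Countable ι] [MeasurableSpace ι]
    [MeasurableSingletonClass ι] {μ ν : Measure ι} (h : ∀ i, μ {i} ≤ ν {i}) : μ ≤ ν :=
  Measure.le_iff.2 fun s hs => by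
    rw [← Measure.tsum_indicator_apply_singleton μ s hs,
      ← Measure.tsum_indicator_apply_singleton ν s hs]
    exact ENNReal.tsum_le_tsum fun i => indicator_le_indicator (h i)

section Fiber

variable {Ω ι : Type*} [MeasurableSpace Ω] {μ : Measure Ω} [Countable ι] [MeasurableSpace ι]
  [MeasurableSingletonClass ι] {κ : Ω → ι}

theorem eLpNorm_map_of_countable (hκ : AEMeasurable κ μ) (x : ι → ℝ≥0∞) (r : ℝ≥0∞) :
    eLpNorm x r (μ.map κ) = eLpNorm (fun u => x (κ u)) r μ :=
  eLpNorm_map_measure (measurable_of_countable x).aestronglyMeasurable hκ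

theorem eLpNorm_comp_le_of_fiber_le (hκ : AEMeasurable κ μ) {M : ℝ≥0∞}
    (hM : ∀ i, μ (κ ⁻¹' {i}) ≤ M) (x : ι → ℝ≥0∞) (r : ℝ≥0∞) :
    eLpNorm (fun u => x (κ u)) r μ ≤ M ^ (1 / r).toReal * eLpNorm x r .count := by
  have hmap : μ.map κ ≤ M • .count := measure_le_of_singleton_le fun i => by
    simpa [Measure.map_apply_of_aemeasurable hκ (measurableSet_singleton i)] using hM i
  rw [← eLpNorm_map_of_countable hκ]
  exact eLpNorm_le_of_measure_le_smul hmap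

theorem eLpNorm_count_le_of_le_fiber (hκ : AEMeasurable κ μ) {m : ℝ≥0∞} (hm₀ : m ≠ 0) (hm : m ≠ ∞)
    (hle : ∀ i, m ≤ μ (κ ⁻¹' {i})) (x : ι → ℝ≥0∞) (r : ℝ≥0∞) :
    eLpNorm x r .count ≤ m⁻¹ ^ (1 / r).toReal * eLpNorm (fun u => x (κ u)) r μ := by
  have hmap : .count ≤ m⁻¹ • μ.map κ := measure_le_of_singleton_le fun i => by
    have := hle i
    rw [← Measure.map_apply_of_aemeasurable hκ (measurableSet_singleton i)] at this
    rw [Measure.count_singleton, Measure.smul_apply, smul_eq_mul,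
      ← ENNReal.inv_mul_cancel hm₀ hm]
    gcongr
  rw [← eLpNorm_map_of_countable hκ]
  exact eLpNorm_le_of_measure_le_smul hmap

end Fiber

theorem eLpNorm_count_comp_add_right (x : ℤ → ℝ≥0∞) (n : ℤ) (r : ℝ≥0∞) :
    eLpNorm (fun k => x (k + n)) r .count = eLpNorm x r .count :=
  eLpNorm_comp_measurePreserving (measurable_of_countable x).aestronglyMeasurable
    (measurePreserving_add_right .count n)

/-- The discrete counterpart of `tailSup`. -/
def discreteTailSup (γ : ℝ≥0∞) (x : ℤ → ℝ≥0∞) (k : ℤ) : ℝ≥0∞ :=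
  ⨆ n : ℕ, γ ^ n * x (k + n)

theorem exists_eLpNorm_discreteTailSup_le {γ : ℝ≥0∞} (hγ : γ < 1) (r : ℝ≥0∞) :
    ∃ C ≠ ∞, ∀ x : ℤ → ℝ≥0∞,
      eLpNorm (discreteTailSup γ x) r .count ≤ C * eLpNorm x r .count := by
  rcases eq_or_ne r 0 with rfl | hr
  · exact ⟨1, ENNReal.one_ne_top, fun x => by simp⟩
  rcases eq_or_ne r ∞ with rfl | hr_top
  · refine ⟨1, ENNReal.one_ne_top, fun x => ?_⟩
    simp only [eLpNorm_exponent_top, eLpNormEssSup_count, enorm_eq_self, one_mul]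
    exact iSup_le fun k => iSup_le fun n =>
      (mul_le_of_le_one_left zero_le (pow_le_one' hγ.le n)).trans (le_iSup x _)
  have hp : 0 < r.toReal := ENNReal.toReal_pos hr hr_top
  set p := r.toReal
  have hgeom : (1 - γ ^ p)⁻¹ ≠ ∞ :=
    ENNReal.inv_ne_top.2 (tsub_pos_of_lt (ENNReal.rpow_lt_one hγ hp)).ne'
  refine ⟨(1 - γ ^ p)⁻¹ ^ (1 / p), by finiteness, fun x => ?_⟩
  simp only [eLpNorm_eq_lintegral_rpow_enorm_toReal hr hr_top, enorm_eq_self, lintegral_count]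
  rw [← ENNReal.mul_rpow_of_nonneg _ _ (by positivity)]
  gcongr
  have hsup : ∀ k, discreteTailSup γ x k ^ p ≤ ∑' n : ℕ, (γ ^ n * x (k + n)) ^ p := fun k => by
    rw [← ENNReal.le_rpow_inv_iff hp]
    exact iSup_le fun n => (ENNReal.le_rpow_inv_iff hp).2
      (ENNReal.le_tsum (f := fun n : ℕ => (γ ^ n * x (k + n)) ^ p) n)
  calc ∑' k, discreteTailSup γ x k ^ p
      ≤ ∑' k, ∑' n : ℕ, (γ ^ n * x (k + n)) ^ p := ENNReal.tsum_le_tsum hsup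
    _ = ∑' n : ℕ, ∑' k : ℤ, (γ ^ p) ^ n * x (k + n) ^ p := by
        rw [ENNReal.tsum_comm]
        simp only [ENNReal.mul_rpow_of_nonneg _ _ hp.le, ← ENNReal.rpow_natCast_mul,
          ← ENNReal.rpow_mul_natCast, mul_comm]
    _ = ∑' n : ℕ, (γ ^ p) ^ n * ∑' k, x k ^ p := by
        simp only [ENNReal.tsum_mul_left]
        congr! 3 with n
        exact (Equiv.addRight (n : ℤ)).tsum_eq fun k => x k ^ p
    _ = (1 - γ ^ p)⁻¹ * ∑' k, x k ^ p := by rw [ENNReal.tsum_mul_right, ENNReal.tsum_geometric]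

/-- The preimages under `τ` of the intervals `[b ^ k, b ^ (k + 1))` have measure bounded from above
and from below. -/
structure HasBoundedBlocks (b : ℕ) (τ : ℝ → ℝ) : Prop where
  aemeasurable : AEMeasurable (fun u => Int.log b (τ u)) logMeasure
  le_measure : ∃ m ≠ 0, m ≠ ∞ ∧ ∀ k, m ≤ logMeasure ((fun u => Int.log b (τ u)) ⁻¹' {k})
  measure_le : ∃ M ≠ ∞, ∀ k, logMeasure ((fun u => Int.log b (τ u)) ⁻¹' {k}) ≤ M

theorem logMeasure_preimage_log_rightInverse {b : ℕ} (hb : 1 < b) {σ σinv : ℝ → ℝ}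
    (hσ : StrictMonoOn σ (Ioi 0)) (hpos : ∀ t, 0 < t → 0 < σ t)
    (hinv : ∀ t, 0 < t → 0 < σinv t ∧ σ (σinv t) = t) (k : ℤ) :
    logMeasure ((fun u => Int.log b (σinv u)) ⁻¹' {k}) =
      ENNReal.ofReal (Real.log (σ (b * b ^ k) / σ (b ^ k))) := by
  have hb₀ : (0 : ℝ) < b := by exact_mod_cast zero_lt_one.trans hb
  have hk : (0 : ℝ) < b ^ k := by positivity
  rw [← logMeasure_Ico (hpos _ hk) (hpos _ (by positivity))]
  refine measure_congr ?_
  filter_upwards [ae_logMeasure_pos] with u hu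
  obtain ⟨hτ, hστ⟩ := hinv u hu
  have hle : σ (b ^ k) ≤ u ↔ k ≤ Int.log b (σinv u) := by
    rw [← Int.zpow_le_iff_le_log hb hτ, ← hσ.le_iff_le hk hτ, hστ]
  have hlt : u < σ (b * b ^ k) ↔ Int.log b (σinv u) < k + 1 := by
    rw [← Int.lt_zpow_iff_log_lt hb hτ, zpow_add_one₀ hb₀.ne', mul_comm (_ ^ k),
      ← hσ.lt_iff_lt hτ (mem_Ioi.2 (by positivity)), hστ]
  refine propext ?_
  change Int.log b (σinv u) = k ↔ σ (b ^ k) ≤ u ∧ u < σ (b * b ^ k)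
  rw [hle, hlt]
  omega

theorem hasBoundedBlocks_of_rightInverse {b : ℕ} (hb : 1 < b) {σ σinv : ℝ → ℝ} {M : ℝ}
    (hσ : StrictMonoOn σ (Ioi 0)) (hpos : ∀ t, 0 < t → 0 < σ t)
    (hinv : ∀ t, 0 < t → 0 < σinv t ∧ σ (σinv t) = t)
    (hlower : ∀ t, 0 < t → 2 * σ t ≤ σ (b * t)) (hupper : ∀ t, 0 < t → σ (b * t) ≤ M * σ t) :
    HasBoundedBlocks b σinv := by
  have : (0 : ℝ) < b := by exact_mod_cast zero_lt_one.trans hb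
  have hmono : MonotoneOn (fun u => Int.log b (σinv u)) (Ioi 0) := fun u hu v hv huv => by
    refine Int.log_mono_right (hinv u hu).1 ((hσ.le_iff_le (hinv u hu).1 (hinv v hv).1).1 ?_)
    rwa [(hinv u hu).2, (hinv v hv).2]
  refine ⟨?_, ⟨ENNReal.ofReal (Real.log 2), ?_, ENNReal.ofReal_ne_top, fun k => ?_⟩,
    ENNReal.ofReal (Real.log M), ENNReal.ofReal_ne_top, fun k => ?_⟩
  · exact (aemeasurable_restrict_of_monotoneOn measurableSet_Ioi hmono).mono_ac
      logMeasure_absolutelyContinuous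
  · simp [Real.log_pos one_lt_two]
  all_goals
    have hk : (0 : ℝ) < b ^ k := by positivity
    have hσk := hpos _ hk
    have hσk' := hpos (b * b ^ k) (by positivity)
    rw [logMeasure_preimage_log_rightInverse hb hσ hpos hinv]
    refine ENNReal.ofReal_le_ofReal (Real.log_le_log (by positivity) ?_)
  · exact (le_div_iff₀ hσk).2 (hlower _ hk)
  · exact (div_le_iff₀ hσk).2 (hupper _ hk)

theorem hasBoundedBlocks_id {b : ℕ} (hb : 1 < b) : HasBoundedBlocks b fun u => u :=
  hasBoundedBlocks_of_rightInverse (σ := fun t => t) (M := b) hb (fun _ _ _ _ h => h)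
    (fun _ ht => ht) (fun _ ht => ⟨ht, rfl⟩)
    (fun t ht => by
      have : (2 : ℝ) ≤ b := by exact_mod_cast hb
      gcongr)
    fun _ _ => le_rfl

theorem HasBoundedBlocks.exists_eLpNorm_comp_log_comparable {b : ℕ} {τ : ℝ → ℝ}
    (hτ : HasBoundedBlocks b τ) (r : ℝ≥0∞) : ∃ C ≠ ∞, ∀ x : ℤ → ℝ≥0∞,
      eLpNorm (fun u => x (Int.log b (τ u))) r logMeasure ≤ C * eLpNorm x r .count ∧
      eLpNorm x r .count ≤ C * eLpNorm (fun u => x (Int.log b (τ u))) r logMeasure := by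
  obtain ⟨m, hm₀, hm, hm_le⟩ := hτ.le_measure
  obtain ⟨M, hM, hM_le⟩ := hτ.measure_le
  refine ⟨M ^ (1 / r).toReal + m⁻¹ ^ (1 / r).toReal, ?_, fun x => ⟨?_, ?_⟩⟩
  · have := ENNReal.inv_ne_top.2 hm₀
    finiteness
  · refine (eLpNorm_comp_le_of_fiber_le hτ.aemeasurable hM_le x r).trans ?_
    gcongr
    exact le_self_add
  · refine (eLpNorm_count_le_of_le_fiber hτ.aemeasurable hm₀ hm hm_le x r).trans ?_
    gcongr
    exact le_add_self

theorem tailSup_le_mul_discreteTailSup {b : ℕ} (hb : 1 < b) {ε : ℝ} (hε : 0 ≤ ε)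
    {F : ℝ → ℝ≥0∞} {x : ℤ → ℝ≥0∞} (hF : ∀ s, 0 < s → F s ≤ x (Int.log b s)) {t : ℝ} (ht : 0 < t) :
    tailSup ε F t ≤ ENNReal.ofReal ((b : ℝ) ^ ε) *
      discreteTailSup (ENNReal.ofReal ((b : ℝ) ^ (-ε))) x (Int.log b t) := by
  have hb₀ : (0 : ℝ) < b := by exact_mod_cast zero_lt_one.trans hb
  refine iSup₂_le fun s (hts : t ≤ s) => ?_
  have hs : 0 < s := ht.trans_le hts
  obtain ⟨n, hn⟩ := Int.le.dest (Int.log_mono_right (b := b) ht hts)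
  have hratio : t / s ≤ b * (b : ℝ) ^ (-n : ℤ) := by
    rw [div_le_iff₀ hs]
    calc t ≤ b ^ (Int.log b t + 1) := (Int.lt_zpow_succ_log_self hb t).le
      _ = b * b ^ (-n : ℤ) * b ^ Int.log b s := by
          rw [← hn, mul_assoc, ← zpow_add₀ hb₀.ne', ← zpow_one_add₀ hb₀.ne']
          congr 1
          ring
      _ ≤ b * b ^ (-n : ℤ) * s := by
          gcongr
          exact Int.zpow_log_le_self hb hs
  have hpow : ENNReal.ofReal ((t / s) ^ ε) ≤
      ENNReal.ofReal ((b : ℝ) ^ ε) * ENNReal.ofReal ((b : ℝ) ^ (-ε)) ^ n := by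
    rw [← ENNReal.ofReal_pow (by positivity), ← ENNReal.ofReal_mul (by positivity)]
    refine ENNReal.ofReal_le_ofReal ?_
    calc (t / s) ^ ε ≤ (b * (b : ℝ) ^ (-n : ℤ)) ^ ε := by gcongr
      _ = (b : ℝ) ^ ε * ((b : ℝ) ^ (-ε)) ^ n := by
          rw [Real.mul_rpow hb₀.le (by positivity), ← Real.rpow_intCast, ← Real.rpow_natCast,
            ← Real.rpow_mul hb₀.le, ← Real.rpow_mul hb₀.le]
          push_cast
          ring_nf
  calc ENNReal.ofReal ((t / s) ^ ε) * F s
      ≤ ENNReal.ofReal ((b : ℝ) ^ ε) * ENNReal.ofReal ((b : ℝ) ^ (-ε)) ^ n *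
          x (Int.log b t + n) := by
        rw [hn]
        gcongr
        exact hF s hs
    _ ≤ _ := by
        rw [mul_assoc]
        gcongr
        exact le_iSup (fun n : ℕ => ENNReal.ofReal ((b : ℝ) ^ (-ε)) ^ n * x (Int.log b t + n)) n

theorem IsWeight.exists_block_comparable {α β : ℝ} {z : ℝ → ℝ≥0∞} (hz : IsWeight α β z) {b : ℕ}
    (hb : 1 < b) : ∃ C ≠ ∞, ∀ J : ℝ → ℝ≥0∞, Monotone J → ∀ s, 0 < s →
      z (b ^ Int.log b s) * J (b ^ Int.log b s) ≤ C * (z s * J s) ∧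
      z s * J s ≤ C * (z (b ^ (Int.log b s + 1)) * J (b ^ (Int.log b s + 1))) := by
  have hb₀ : (0 : ℝ) < b := by exact_mod_cast zero_lt_one.trans hb
  obtain ⟨C, hC, hC_le⟩ := hz.exists_comparable b
  refine ⟨C, hC, fun J hJ s hs => ?_⟩
  have hlow : (b : ℝ) ^ Int.log b s ≤ s := Int.zpow_log_le_self hb hs
  have hupp : s ≤ (b : ℝ) ^ (Int.log b s + 1) := (Int.lt_zpow_succ_log_self hb s).le
  have hstep : (b : ℝ) ^ (Int.log b s + 1) = b * b ^ Int.log b s := by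
    rw [zpow_add_one₀ hb₀.ne', mul_comm]
  rw [← mul_assoc, ← mul_assoc]
  constructor
  · gcongr ?_ * ?_
    · exact (hC_le _ s (by positivity) hlow (hupp.trans_eq hstep)).1
    · exact hJ hlow
  · gcongr ?_ * ?_
    · exact (hC_le s _ hs hupp (by rw [hstep]; gcongr)).1
    · exact hJ hupp

theorem exists_two_mul_le_of_isWeight {γ δ : ℝ} {σ : ℝ → ℝ} (hγ : 0 < γ)
    (hσ : IsWeight γ δ fun t => ENNReal.ofReal (σ t)) : ∃ b : ℕ, 1 < b ∧ ∃ M : ℝ, ∀ t, 0 < t →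
      2 * σ t ≤ σ (b * t) ∧ σ (b * t) ≤ M * σ t := by
  have hpos : ∀ t, 0 < t → 0 < σ t := fun t ht => by simpa using hσ.ne_zero t ht
  obtain ⟨C, hC, hC_le⟩ := hσ.lower
  have hdecay : Tendsto (fun b : ℕ => C.toReal * (b : ℝ) ^ (-γ)) atTop (nhds 0) := by
    simpa using ((tendsto_rpow_neg_atTop hγ).comp tendsto_natCast_atTop_atTop).const_mul C.toReal
  obtain ⟨b, hb_half, hb⟩ :=
    ((hdecay.eventually_le_const one_half_pos).and (eventually_gt_atTop 1)).exists
  have hb₁ : (1 : ℝ) < b := by exact_mod_cast hb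
  obtain ⟨D, hD, hD_le⟩ := hσ.exists_comparable b
  refine ⟨b, hb, D.toReal, fun t ht => ?_⟩
  have hbt : 0 < b * t := by positivity
  have htb : t ≤ b * t := le_mul_of_one_le_left ht.le hb₁.le
  constructor
  · have h := ENNReal.toReal_mono (by finiteness) (hC_le t (b * t) ht htb)
    have hratio : t / (b * t) = (b : ℝ)⁻¹ := by
      field_simp
    rw [ENNReal.toReal_mul, ENNReal.toReal_mul, ENNReal.toReal_ofReal (hpos t ht).le,
      ENNReal.toReal_ofReal (by positivity), ENNReal.toReal_ofReal (hpos _ hbt).le, hratio,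
      Real.inv_rpow (by positivity), ← Real.rpow_neg (by positivity)] at h
    have : C.toReal * (b : ℝ) ^ (-γ) * σ (b * t) ≤ 1 / 2 * σ (b * t) :=
      mul_le_mul_of_nonneg_right hb_half (hpos _ hbt).le
    linarith
  · have h := ENNReal.toReal_mono (by finiteness) (hD_le t (b * t) ht htb le_rfl).2
    rwa [ENNReal.toReal_mul, ENNReal.toReal_ofReal (hpos _ hbt).le,
      ENNReal.toReal_ofReal (hpos t ht).le] at h

section ChangeOfVariables

variable {b : ℕ} {τ : ℝ → ℝ} {α β κ : ℝ} {z : ℝ → ℝ≥0∞}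

theorem IsWeight.exists_eLpNorm_mul_le_comp (hz : IsWeight α β z) (hb : 1 < b)
    (hτ : HasBoundedBlocks b τ) (hτ₀ : ∀ u, 0 < u → 0 < τ u) {A : ℝ≥0∞} (hA : A ≠ ∞) (r : ℝ≥0∞) :
    ∃ C ≠ ∞, ∀ J H : ℝ → ℝ≥0∞, Monotone J → (∀ t, 0 < t → J t ≤ A * H t) →
      eLpNorm (fun t => z t * J t) r logMeasure ≤
        C * eLpNorm (fun u => z (τ u) * H (τ u)) r logMeasure := by
  obtain ⟨B, hB, hB_le⟩ := hz.exists_block_comparable hb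
  obtain ⟨D, hD, hD_le⟩ := (hasBoundedBlocks_id hb).exists_eLpNorm_comp_log_comparable r
  obtain ⟨E, hE, hE_le⟩ := hτ.exists_eLpNorm_comp_log_comparable r
  refine ⟨B * D * E * (B * A), by finiteness, fun J H hJ hJH => ?_⟩
  set x : ℤ → ℝ≥0∞ := fun k => z (b ^ k) * J (b ^ k)
  have hx : ∀ u, 0 < u → x (Int.log b (τ u)) ≤ B * A * (z (τ u) * H (τ u)) := fun u hu => by
    calc x (Int.log b (τ u)) ≤ B * (z (τ u) * J (τ u)) := (hB_le J hJ _ (hτ₀ u hu)).1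
      _ ≤ B * (z (τ u) * (A * H (τ u))) := by
          gcongr _ * (_ * ?_)
          exact hJH _ (hτ₀ u hu)
      _ = B * A * (z (τ u) * H (τ u)) := by ring
  calc eLpNorm (fun t => z t * J t) r logMeasure
      ≤ B * eLpNorm (fun t => x (Int.log b t + 1)) r logMeasure :=
        eLpNorm_le_const_mul hB (ae_logMeasure_pos.mono fun t ht => (hB_le J hJ t ht).2) r
    _ ≤ B * (D * eLpNorm x r .count) := by
        rw [← eLpNorm_count_comp_add_right x 1]
        gcongr
        exact (hD_le fun k => x (k + 1)).1
    _ ≤ B * (D * (E * eLpNorm (fun u => x (Int.log b (τ u))) r logMeasure)) := by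
        gcongr
        exact (hE_le x).2
    _ ≤ B * (D * (E * (B * A * eLpNorm (fun u => z (τ u) * H (τ u)) r logMeasure))) := by
        gcongr _ * (_ * (_ * ?_))
        exact eLpNorm_le_const_mul (by finiteness) (ae_logMeasure_pos.mono hx) r
    _ = _ := by ring

theorem IsWeight.exists_mul_tailSup_le_mul_discreteTailSup (hz : IsWeight α β z)
    (hκ : 0 ≤ κ + α) (hb : 1 < b) : ∃ C ≠ ∞, ∀ J : ℝ → ℝ≥0∞, Monotone J → ∀ t, 0 < t →
      z t * tailSup κ J t ≤ C * discreteTailSup (ENNReal.ofReal ((b : ℝ) ^ (-(κ + α))))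
        (fun k => z (b ^ (k + 1)) * J (b ^ (k + 1))) (Int.log b t) := by
  obtain ⟨A, hA, hA_le⟩ := hz.exists_mul_tailSup_le κ
  obtain ⟨B, hB, hB_le⟩ := hz.exists_block_comparable hb
  set P : ℝ≥0∞ := ENNReal.ofReal ((b : ℝ) ^ (κ + α))
  refine ⟨A * B * P, by finiteness, fun J hJ t ht => ?_⟩
  set y : ℤ → ℝ≥0∞ := fun k => z (b ^ (k + 1)) * J (b ^ (k + 1))
  set γ : ℝ≥0∞ := ENNReal.ofReal ((b : ℝ) ^ (-(κ + α)))
  calc z t * tailSup κ J t ≤ A * tailSup (κ + α) (fun s => z s * J s) t := hA_le J t ht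
    _ ≤ A * (B * tailSup (κ + α) (fun s => y (Int.log b s)) t) := by
        gcongr
        exact tailSup_le_mul fun s hs => (hB_le J hJ s (ht.trans_le hs)).2
    _ ≤ A * (B * (P * discreteTailSup γ y (Int.log b t))) := by
        gcongr _ * (_ * ?_)
        exact tailSup_le_mul_discreteTailSup hb hκ (fun _ _ => le_rfl) ht
    _ = A * B * P * discreteTailSup γ y (Int.log b t) := by ring

theorem IsWeight.exists_eLpNorm_comp_mul_le (hz : IsWeight α β z) (hκ : 0 < κ + α) (hb : 1 < b)
    (hτ : HasBoundedBlocks b τ) (hτ₀ : ∀ u, 0 < u → 0 < τ u) {A : ℝ≥0∞} (hA : A ≠ ∞) (r : ℝ≥0∞) :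
    ∃ C ≠ ∞, ∀ J H : ℝ → ℝ≥0∞, Monotone J → (∀ t, 0 < t → H t ≤ A * tailSup κ J t) →
      eLpNorm (fun u => z (τ u) * H (τ u)) r logMeasure ≤
        C * eLpNorm (fun t => z t * J t) r logMeasure := by
  have hb₁ : (1 : ℝ) < b := by exact_mod_cast hb
  obtain ⟨B, hB, hB_le⟩ := hz.exists_block_comparable hb
  obtain ⟨P, hP, hP_le⟩ := hz.exists_mul_tailSup_le_mul_discreteTailSup hκ.le hb
  obtain ⟨D, hD, hD_le⟩ := (hasBoundedBlocks_id hb).exists_eLpNorm_comp_log_comparable r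
  obtain ⟨E, hE, hE_le⟩ := hτ.exists_eLpNorm_comp_log_comparable r
  set γ : ℝ≥0∞ := ENNReal.ofReal ((b : ℝ) ^ (-(κ + α)))
  have hγ : γ < 1 := ENNReal.ofReal_lt_one.2 (Real.rpow_lt_one_of_one_lt_of_neg hb₁ (by linarith))
  obtain ⟨L, hL, hL_le⟩ := exists_eLpNorm_discreteTailSup_le hγ r
  refine ⟨A * P * E * L * D * B, by finiteness, fun J H hJ hHJ => ?_⟩
  set x : ℤ → ℝ≥0∞ := fun k => z (b ^ k) * J (b ^ k)
  set y : ℤ → ℝ≥0∞ := fun k => x (k + 1)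
  have hHy : ∀ u, 0 < u → z (τ u) * H (τ u) ≤
      A * P * discreteTailSup γ y (Int.log b (τ u)) := fun u hu => by
    calc z (τ u) * H (τ u) ≤ z (τ u) * (A * tailSup κ J (τ u)) := by
          gcongr
          exact hHJ _ (hτ₀ u hu)
      _ = A * (z (τ u) * tailSup κ J (τ u)) := by ring
      _ ≤ A * (P * discreteTailSup γ y (Int.log b (τ u))) := by
          gcongr _ * ?_
          exact hP_le J hJ _ (hτ₀ u hu)
      _ = A * P * discreteTailSup γ y (Int.log b (τ u)) := by ring
  calc eLpNorm (fun u => z (τ u) * H (τ u)) r logMeasure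
      ≤ A * P * eLpNorm (fun u => discreteTailSup γ y (Int.log b (τ u))) r logMeasure :=
        eLpNorm_le_const_mul (by finiteness) (ae_logMeasure_pos.mono hHy) r
    _ ≤ A * P * (E * (L * eLpNorm y r .count)) := by
        gcongr _ * ?_
        exact (hE_le _).1.trans (by gcongr; exact hL_le _)
    _ ≤ A * P * (E * (L * (D * eLpNorm (fun t => x (Int.log b t)) r logMeasure))) := by
        rw [eLpNorm_count_comp_add_right x 1]
        gcongr _ * (_ * (_ * ?_))
        exact (hD_le x).2
    _ ≤ A * P * (E * (L * (D * (B * eLpNorm (fun t => z t * J t) r logMeasure)))) := by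
        gcongr _ * (_ * (_ * (_ * ?_)))
        exact eLpNorm_le_const_mul hB (ae_logMeasure_pos.mono fun t ht => (hB_le J hJ t ht).1) r
    _ = _ := by ring

end ChangeOfVariables

end Discretization

/-! ### Reiteration -/

section Reiteration

theorem equivNorms_of_exists_le {X : Type*} {nX nY : X → ℝ≥0∞} (h : ∃ C ≠ ∞, ∀ f, nX f ≤ C * nY f)
    (h' : ∃ C ≠ ∞, ∀ f, nY f ≤ C * nX f) : EquivNorms nX nY := by
  obtain ⟨C, hC, hC_le⟩ := h
  obtain ⟨D, hD, hD_le⟩ := h'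
  refine ⟨1 + C + D, by positivity, by finiteness, fun f => ⟨?_, (hC_le f).trans ?_⟩⟩
  · rw [mul_comm, ← div_eq_mul_inv]
    refine ENNReal.div_le_of_le_mul' ((hD_le f).trans ?_)
    gcongr
    exact le_add_self
  · gcongr
    exact le_add_self.trans le_self_add

/-- Equivalence `φ ≈ ψ` on `(0, ∞)` of `[0, ∞]`-valued functions. -/
def Comparable (φ ψ : ℝ → ℝ≥0∞) : Prop :=
  ∃ C ≠ ∞, ∀ t, 0 < t → φ t ≤ C * ψ t ∧ ψ t ≤ C * φ t

theorem EquivOn.comparable {f g : ℝ → ℝ} (h : EquivOn (Ioi 0) f g) :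
    Comparable (fun t => ENNReal.ofReal (f t)) fun t => ENNReal.ofReal (g t) := by
  obtain ⟨C, hC, hfg⟩ := h
  refine ⟨ENNReal.ofReal C, ENNReal.ofReal_ne_top, fun t ht => ?_⟩
  rw [← ENNReal.ofReal_mul hC.le, ← ENNReal.ofReal_mul hC.le]
  exact ⟨ENNReal.ofReal_le_ofReal (hfg t ht).2,
    ENNReal.ofReal_le_ofReal ((inv_mul_le_iff₀ hC).1 (hfg t ht).1)⟩

namespace Comparable

variable {φ φ' φ'' : ℝ → ℝ≥0∞}

theorem congr_right (h : Comparable φ φ') (hφ : ∀ t, 0 < t → φ' t = φ'' t) : Comparable φ φ'' := by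
  obtain ⟨C, hC, hC_le⟩ := h
  exact ⟨C, hC, fun t ht => hφ t ht ▸ hC_le t ht⟩

theorem symm (h : Comparable φ φ') : Comparable φ' φ := by
  obtain ⟨C, hC, hC_le⟩ := h
  exact ⟨C, hC, fun t ht => (hC_le t ht).symm⟩

theorem trans (h : Comparable φ φ') (h' : Comparable φ' φ'') : Comparable φ φ'' := by
  obtain ⟨C, hC, hC_le⟩ := h
  obtain ⟨D, hD, hD_le⟩ := h'
  refine ⟨C * D, by finiteness, fun t ht => ⟨?_, ?_⟩⟩
  · calc φ t ≤ C * φ' t := (hC_le t ht).1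
      _ ≤ C * (D * φ'' t) := by gcongr; exact (hD_le t ht).1
      _ = C * D * φ'' t := by ring
  · calc φ'' t ≤ D * φ' t := (hD_le t ht).2
      _ ≤ D * (C * φ t) := by gcongr; exact (hC_le t ht).2
      _ = C * D * φ t := by ring

theorem const_mul (h : Comparable φ φ') (ψ : ℝ → ℝ≥0∞) :
    Comparable (fun t => ψ t * φ t) fun t => ψ t * φ' t := by
  obtain ⟨C, hC, hC_le⟩ := h
  refine ⟨C, hC, fun t ht => ⟨?_, ?_⟩⟩
  · calc ψ t * φ t ≤ ψ t * (C * φ' t) := by gcongr; exact (hC_le t ht).1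
      _ = C * (ψ t * φ' t) := mul_left_comm ..
  · calc ψ t * φ' t ≤ ψ t * (C * φ t) := by gcongr; exact (hC_le t ht).2
      _ = C * (ψ t * φ t) := mul_left_comm ..

theorem inv (h : Comparable φ φ') : Comparable (fun t => (φ t)⁻¹) fun t => (φ' t)⁻¹ := by
  obtain ⟨C, hC, hC_le⟩ := h
  have hD₀ : 1 + C ≠ 0 := by positivity
  have hD : 1 + C ≠ ∞ := by finiteness
  have hinv : ∀ {x y : ℝ≥0∞}, x ≤ C * y → y⁻¹ ≤ (1 + C) * x⁻¹ := by
    intro x y hxy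
    have hx : (1 + C)⁻¹ * x ≤ y := (ENNReal.inv_mul_le_iff hD₀ hD).2 (hxy.trans (by gcongr; simp))
    simpa [ENNReal.mul_inv (Or.inl (ENNReal.inv_ne_zero.2 hD)) (Or.inl (ENNReal.inv_ne_top.2 hD₀))]
      using ENNReal.inv_le_inv.2 hx
  exact ⟨1 + C, hD, fun t ht => ⟨hinv (hC_le t ht).2, hinv (hC_le t ht).1⟩⟩

end Comparable

theorem IsWeight.of_comparable {α β : ℝ} {φ ψ : ℝ → ℝ≥0∞} (hφ : IsWeight α β φ)
    (hψ : AEMeasurable ψ logMeasure) (h : Comparable ψ φ) : IsWeight α β ψ := by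
  obtain ⟨C, hC, hC_le⟩ := h
  refine ⟨hψ, fun t ht h0 => hφ.ne_zero t ht (by simpa [h0] using (hC_le t ht).2),
    fun t ht => ne_top_of_le_ne_top (ENNReal.mul_ne_top hC (hφ.ne_top t ht)) (hC_le t ht).1, ?_, ?_⟩
  · obtain ⟨D, hD, hD_le⟩ := hφ.lower
    refine ⟨C * D * C, by finiteness, fun s t hs hst => ?_⟩
    calc ψ s ≤ C * φ s := (hC_le s hs).1
      _ ≤ C * (D * ENNReal.ofReal ((s / t) ^ α) * (C * ψ t)) := by
          gcongr _ * ?_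
          refine (hD_le s t hs hst).trans ?_
          gcongr _ * ?_
          exact (hC_le t (hs.trans_le hst)).2
      _ = C * D * C * ENNReal.ofReal ((s / t) ^ α) * ψ t := by ring
  · obtain ⟨D, hD, hD_le⟩ := hφ.upper
    refine ⟨C * D * C, by finiteness, fun s t hs hst => ?_⟩
    calc ψ t ≤ C * φ t := (hC_le t (hs.trans_le hst)).1
      _ ≤ C * (D * ENNReal.ofReal ((t / s) ^ β) * (C * ψ s)) := by
          gcongr _ * ?_
          refine (hD_le s t hs hst).trans ?_
          gcongr _ * ?_
          exact (hC_le s hs).2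
      _ = C * D * C * ENNReal.ofReal ((t / s) ^ β) * ψ s := by ring

theorem IsWeight.comparable_headNorm {α β : ℝ} {φ : ℝ → ℝ≥0∞} {q : ℝ≥0∞} (hφ : IsWeight α β φ)
    (hα : 0 < α) (hq : q ≠ 0) : Comparable (_root_.headNorm q φ) φ := by
  obtain ⟨C, hC, hC_le⟩ := hφ.exists_headNorm_le hα q
  obtain ⟨D, hD, hD_le⟩ := hφ.exists_le_headNorm hq
  refine ⟨C + D, by finiteness, fun t ht => ⟨(hC_le t ht).trans ?_, (hD_le t ht).trans ?_⟩⟩ <;>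
    gcongr
  exacts [le_self_add, le_add_self]

theorem IsWeight.comparable_charWeight {α β : ℝ} {w : ℝ → ℝ≥0∞} {q : ℝ≥0∞} (hw : IsWeight α β w)
    (hα : -1 < α) (hq : q ≠ 0) : Comparable (charWeight w q) fun t => (w t)⁻¹ := by
  have hφ : IsWeight (1 + α) (1 + β) fun u => ENNReal.ofReal u * w u := isWeight_ofReal.mul hw
  refine ((hφ.comparable_headNorm (by linarith) hq).inv.const_mul ENNReal.ofReal).congr_right
    fun t ht => ?_
  have ht₀ : ENNReal.ofReal t ≠ 0 := by simpa using ht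
  rw [ENNReal.mul_inv (Or.inl ht₀) (Or.inl ENNReal.ofReal_ne_top), ← mul_assoc,
    ENNReal.mul_inv_cancel ht₀ ENNReal.ofReal_ne_top, one_mul]

variable {G : Type*} [AddCommGroup G] {N₀ N₁ N : G → ℝ≥0∞} {σ σinv : ℝ → ℝ} {q r : ℝ≥0∞}

theorem exists_hasBoundedBlocks_of_comparable {γ δ : ℝ} {W : ℝ → ℝ≥0∞} (hW : IsWeight γ δ W)
    (hγ : 0 < γ) (hσ : StrictMonoOn σ (Ioi 0)) (hinv : ∀ t, 0 < t → 0 < σinv t ∧ σ (σinv t) = t)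
    (hσW : Comparable (fun t => ENNReal.ofReal (σ t)) W) :
    ∃ b : ℕ, 1 < b ∧ HasBoundedBlocks b σinv := by
  have hσ_wt : IsWeight γ δ fun t => ENNReal.ofReal (σ t) := by
    refine hW.of_comparable (AEMeasurable.ennreal_ofReal ?_) hσW
    exact (aemeasurable_restrict_of_monotoneOn measurableSet_Ioi hσ.monotoneOn).mono_ac
      logMeasure_absolutelyContinuous
  obtain ⟨b, hb, M, hM⟩ := exists_two_mul_le_of_isWeight hγ hσ_wt
  have hpos : ∀ t, 0 < t → 0 < σ t := fun t ht => by simpa using hσ_wt.ne_zero t ht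
  exact ⟨b, hb, hasBoundedBlocks_of_rightInverse hb hσ hpos hinv (fun t ht => (hM t ht).1)
    fun t ht => (hM t ht).2⟩

theorem IsUpperEndpoint.equivNorms {α β γ δ ε η : ℝ} {w ρ z : ℝ → ℝ≥0∞}
    (hN : IsUpperEndpoint N₀ N₁ N ρ η) (h₀ : IsQuasiNorm N₀) (h₁ : IsQuasiNorm N₁)
    (hw : IsWeight α β w) (hα : -1 < α) (hβ : β < 0) (hwρ : IsWeight γ δ fun t => w t * ρ t)
    (hγ : 0 < γ) (hz : IsWeight (-ε) ε z) (hε : ε < η + α) (hq : q ≠ 0)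
    (hσ : StrictMonoOn σ (Ioi 0)) (hinv : ∀ t, 0 < t → 0 < σinv t ∧ σ (σinv t) = t)
    (hσρ : Comparable (fun t => ENNReal.ofReal (σ t)) fun t => w t * ρ t) :
    EquivNorms (weightNorm (weightNorm N₀ N₁ w q) N (fun u => z (σinv u)) r)
      fun f => eLpNorm (fun t => z t * weightHead N₀ N₁ w q f t) r logMeasure := by
  obtain ⟨b, hb, hτ⟩ := exists_hasBoundedBlocks_of_comparable hwρ hγ hσ hinv hσρ
  have hτ₀ : ∀ u, 0 < u → 0 < σinv u := fun u hu => (hinv u hu).1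
  obtain ⟨C, hC, hC_le⟩ := hσρ
  obtain ⟨A, hA, hA_le⟩ := hN.exists_Kf_le_tailSup_weightHead h₀ h₁ hw hα hβ hq
    ⟨C, hC, fun t ht => (hC_le t ht).1⟩
  obtain ⟨B, hB, hB_le⟩ := hN.exists_weightHead_le_Kf h₀ h₁ hw.aemeasurable hwρ hγ
    ⟨C, hC, fun t ht => (hC_le t ht).2⟩ q
  obtain ⟨D, hD, hD_le⟩ := hz.exists_eLpNorm_comp_mul_le (κ := η + α) (by linarith) hb hτ hτ₀ hA r
  obtain ⟨E, hE, hE_le⟩ := hz.exists_eLpNorm_mul_le_comp hb hτ hτ₀ hB r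
  have hsubst : ∀ f, weightNorm (weightNorm N₀ N₁ w q) N (fun u => z (σinv u)) r f =
      eLpNorm (fun u => z (σinv u) * Kf (weightNorm N₀ N₁ w q) N (σ (σinv u)) f) r logMeasure :=
    fun f => eLpNorm_congr_ae (ae_logMeasure_pos.mono fun u hu => by simp only [(hinv u hu).2])
  simp only [EquivNorms, hsubst]
  exact equivNorms_of_exists_le
    ⟨D, hD, fun f => hD_le _ (fun t => Kf (weightNorm N₀ N₁ w q) N (σ t) f)
      (headNorm_mono q _) (hA_le f)⟩
    ⟨E, hE, fun f => hE_le _ (fun t => Kf (weightNorm N₀ N₁ w q) N (σ t) f)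
      (headNorm_mono q _) (hB_le f)⟩

variable {θ θ₁ : ℝ} {q₁ : ℝ≥0∞} {a a₁ b : ℝ → ℝ}

theorem IsUpperEndpoint.equivNorms_normK_normL {α γ δ η : ℝ} {ρ : ℝ → ℝ≥0∞}
    (hN : IsUpperEndpoint N₀ N₁ N ρ η) (h₀ : IsQuasiNorm N₀) (h₁ : IsQuasiNorm N₁)
    (ha : SlowlyVarying a) (hb : SlowlyVarying b) (hr : 0 < r) (hq : 0 < q) (hθ : 0 < θ)
    (hα : -1 < α) (hαθ : α < -θ) (hαη : 0 < η + α)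
    (hρ : IsWeight γ δ ρ) (hαγ : 0 < α + γ)
    (hσ : StrictMonoOn σ (Ioi 0)) (hinv : ∀ t, 0 < t → 0 < σinv t ∧ σ (σinv t) = t)
    (hσρ : Comparable (fun t => ENNReal.ofReal (σ t)) fun t => powWeight θ a t * ρ t) :
    EquivNorms (normK (normK N₀ N₁ θ q a) N 0 r fun t => b (σinv t) / a (σinv t))
      (normL N₀ N₁ θ r q b a) := by
  have hw : IsWeight α (-θ / 2) (powWeight θ a) := ha.isWeight_powWeight hαθ (by linarith)
  have hz := ha.isWeight_div hb (half_pos hαη)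
  have h := hN.equivNorms (r := r) h₀ h₁ hw hα (by linarith) (hw.mul hρ) hαγ hz (half_lt_self hαη)
    hq.ne' hσ hinv hσρ
  rw [normK_eq_weightNorm hr.ne', normK_eq_weightNorm hq.ne']
  simpa only [powWeight_zero, funext (normL_eq_eLpNorm_weightHead hr.ne' hq.ne' θ b a),
    funext (powWeight_zero _)] using h

theorem equivNorms_normK_right (h₀ : IsQuasiNorm N₀) (h₁ : IsQuasiNorm N₁) (hθ : 0 < θ)
    (hθ₁ : θ < 1) (hr : 0 < r) (hq : 0 < q) (ha : SlowlyVarying a) (hb : SlowlyVarying b)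
    (hσ : StrictMonoOn σ (Ioi 0)) (hinv : ∀ t, 0 < t → 0 < σinv t ∧ σ (σinv t) = t)
    (hσa : EquivOn (Ioi 0) σ fun t => t ^ (1 - θ) * a t) :
    EquivNorms (normK (normK N₀ N₁ θ q a) N₁ 0 r fun t => b (σinv t) / a (σinv t))
      (normL N₀ N₁ θ r q b a) := by
  refine (isUpperEndpoint_right h₀.zero 1).equivNorms_normK_normL (α := -((θ + 1) / 2)) h₀ h₁ ha hb
    hr hq hθ (by linarith) (by linarith) (by linarith) isWeight_ofReal (by linarith) hσ hinv
    (hσa.comparable.congr_right fun t ht => ?_)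
  exact (powWeight_mul_ofReal ht θ a).symm

theorem equivNorms_normK_normK (h₀ : IsQuasiNorm N₀) (h₁ : IsQuasiNorm N₁) (hθ : 0 < θ)
    (hθθ₁ : θ < θ₁) (hθ₁ : θ₁ ≤ 1) (hr : 0 < r) (hq : 0 < q) (hq₁ : 0 < q₁)
    (ha : SlowlyVarying a) (ha₁ : SlowlyVarying a₁) (hb : SlowlyVarying b)
    (hfin : headNorm q₁ (fun u => ENNReal.ofReal u * powWeight θ₁ a₁ u) 1 ≠ ∞)
    (hσ : StrictMonoOn σ (Ioi 0)) (hinv : ∀ t, 0 < t → 0 < σinv t ∧ σ (σinv t) = t)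
    (hσa : Comparable (fun t => ENNReal.ofReal (σ t))
      fun t => powWeight θ a t * charWeight (powWeight θ₁ a₁) q₁ t) :
    EquivNorms
      (normK (normK N₀ N₁ θ q a) (normK N₀ N₁ θ₁ q₁ a₁) 0 r fun t => b (σinv t) / a (σinv t))
      (normL N₀ N₁ θ r q b a) := by
  have hw₁ : IsWeight (-θ₁ - 1) (-((θ + 2 * θ₁) / 3)) (powWeight θ₁ a₁) :=
    ha₁.isWeight_powWeight (by linarith) (by linarith)
  have hN := isUpperEndpoint_weightNorm (η := (θ + θ₁) / 2) h₀ h₁ hw₁ (by linarith) (by linarith)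
    hq₁.ne' hfin
  rw [normK_eq_weightNorm hq₁.ne']
  exact hN.equivNorms_normK_normL (α := -((2 * θ + θ₁) / 3)) h₀ h₁ ha hb hr hq hθ (by linarith)
    (by linarith) (by linarith) (isWeight_charWeight hw₁ hq₁.ne' hfin) (by linarith) hσ hinv hσa

theorem equivNorms_normK_of_lt_one (h₀ : IsQuasiNorm N₀) (h₁ : IsQuasiNorm N₁) (hθ : 0 < θ)
    (hθθ₁ : θ < θ₁) (hθ₁ : θ₁ < 1) (hr : 0 < r) (hq : 0 < q) (hq₁ : 0 < q₁)
    (ha : SlowlyVarying a) (ha₁ : SlowlyVarying a₁) (hb : SlowlyVarying b)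
    (hσ : StrictMonoOn σ (Ioi 0)) (hinv : ∀ t, 0 < t → 0 < σinv t ∧ σ (σinv t) = t)
    (hσa : EquivOn (Ioi 0) σ fun t => t ^ (θ₁ - θ) * (a t / a₁ t)) :
    EquivNorms
      (normK (normK N₀ N₁ θ q a) (normK N₀ N₁ θ₁ q₁ a₁) 0 r fun t => b (σinv t) / a (σinv t))
      (normL N₀ N₁ θ r q b a) := by
  have hw₁ : IsWeight (-((θ₁ + 1) / 2)) 0 (powWeight θ₁ a₁) :=
    ha₁.isWeight_powWeight (by linarith) (by linarith)
  have hφ := isWeight_ofReal.mul hw₁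
  have hfin : headNorm q₁ (fun u => ENNReal.ofReal u * powWeight θ₁ a₁ u) 1 ≠ ∞ := by
    obtain ⟨C, hC, hC_le⟩ := hφ.exists_headNorm_le (by linarith) q₁
    exact ne_top_of_le_ne_top (ENNReal.mul_ne_top hC (hφ.ne_top 1 one_pos)) (hC_le 1 one_pos)
  refine equivNorms_normK_normK h₀ h₁ hθ hθθ₁ hθ₁.le hr hq hq₁ ha ha₁ hb hfin hσ hinv
    ((hσa.comparable.congr_right fun t (ht : 0 < t) => ?_).trans
      ((hw₁.comparable_charWeight (by linarith) hq₁.ne').symm.const_mul _))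
  have ha₁t : 0 < a₁ t := ha₁.2.1 t ht
  rw [powWeight, powWeight, ← ENNReal.ofReal_inv_of_pos (by positivity),
    ← ENNReal.ofReal_mul' (by positivity), sub_eq_neg_add, Real.rpow_add ht, Real.rpow_neg ht.le θ₁]
  congr 1
  field_simp

theorem LqNorm_svWgt_eq_headNorm (hq : q ≠ 0) (a : ℝ → ℝ) (t : ℝ) :
    LqNorm q (Ioo 0 t) (svWgt q a) =
      headNorm q (fun u => ENNReal.ofReal u * powWeight 1 a u) t := by
  have h := LqNorm_eq_eLpNorm_powWeight hq (measurableSet_Ioo (a := 0) (b := t))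
    Ioo_subset_Ioi_self 0 a 1
  simp only [Pi.one_apply, mul_one, neg_zero, zero_sub, powWeight_zero] at h
  refine h.trans (eLpNorm_congr_ae ?_)
  filter_upwards [ae_restrict_mem measurableSet_Ioo] with u hu
  rw [mul_comm, powWeight_mul_ofReal hu.1, sub_self, Real.rpow_zero, one_mul]

theorem equivNorms_normK_one (h₀ : IsQuasiNorm N₀) (h₁ : IsQuasiNorm N₁) (hθ : 0 < θ)
    (hθ₁ : θ < 1) (hr : 0 < r) (hq : 0 < q) (hq₁ : 0 < q₁)
    (ha : SlowlyVarying a) (ha₁ : SlowlyVarying a₁) (hb : SlowlyVarying b)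
    (hfin : LqNorm q₁ (Ioo 0 1) (svWgt q₁ a₁) ≠ ∞)
    (hσ : StrictMonoOn σ (Ioi 0)) (hinv : ∀ t, 0 < t → 0 < σinv t ∧ σ (σinv t) = t)
    (hσa : EquivOn (Ioi 0) σ
      fun t => t ^ (1 - θ) * a t / (LqNorm q₁ (Ioo 0 t) (svWgt q₁ a₁)).toReal) :
    EquivNorms
      (normK (normK N₀ N₁ θ q a) (normK N₀ N₁ 1 q₁ a₁) 0 r fun t => b (σinv t) / a (σinv t))
      (normL N₀ N₁ θ r q b a) := by
  simp only [LqNorm_svWgt_eq_headNorm hq₁.ne'] at hfin hσa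
  refine equivNorms_normK_normK h₀ h₁ hθ hθ₁ le_rfl hr hq hq₁ ha ha₁ hb hfin hσ hinv
    (hσa.comparable.congr_right fun t ht => ?_)
  have hw₁ : IsWeight (-2) 0 (powWeight 1 a₁) := ha₁.isWeight_powWeight (by norm_num) (by norm_num)
  have hB := (isWeight_ofReal.mul hw₁).headNorm hq₁.ne' hfin
  rw [ENNReal.ofReal_div_of_pos (ENNReal.toReal_pos (hB.ne_zero t ht) (hB.ne_top t ht)),
    ENNReal.ofReal_toReal (hB.ne_top t ht), charWeight, ← mul_assoc, div_eq_mul_inv]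
  congr 1
  exact (powWeight_mul_ofReal ht θ a).symm

theorem theorem10_general (h₀ : IsQuasiNorm N₀) (h₁ : IsQuasiNorm N₁) {θ₀ θ₁ : ℝ} (hθ₀ : 0 < θ₀)
    (hθ₀₁ : θ₀ < θ₁) (hθ₁ : θ₁ < 1) {r₀ q₀ q₁ : ℝ≥0∞} (hr₀ : 0 < r₀) (hq₀ : 0 < q₀) (hq₁ : 0 < q₁)
    {a₀ a₁ b₀ : ℝ → ℝ} (ha₀ : SlowlyVarying a₀) (ha₁ : SlowlyVarying a₁) (hb₀ : SlowlyVarying b₀) :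
    (∀ σ σinv : ℝ → ℝ, StrictMonoOn σ (Ioi 0) → (∀ t, 0 < t → 0 < σinv t ∧ σ (σinv t) = t) →
      EquivOn (Ioi 0) σ (fun t => t ^ (1 - θ₀) * a₀ t) →
      EquivNorms
        (normK (normK N₀ N₁ θ₀ q₀ a₀) N₁ 0 r₀ fun t => b₀ (σinv t) / a₀ (σinv t))
        (normL N₀ N₁ θ₀ r₀ q₀ b₀ a₀)) ∧
    (LqNorm q₁ (Ioo 0 1) (svWgt q₁ a₁) ≠ ∞ → ∀ σ σinv : ℝ → ℝ, StrictMonoOn σ (Ioi 0) →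
      (∀ t, 0 < t → 0 < σinv t ∧ σ (σinv t) = t) →
      EquivOn (Ioi 0) σ
        (fun t => t ^ (1 - θ₀) * a₀ t / (LqNorm q₁ (Ioo 0 t) (svWgt q₁ a₁)).toReal) →
      EquivNorms
        (normK (normK N₀ N₁ θ₀ q₀ a₀) (normK N₀ N₁ 1 q₁ a₁) 0 r₀
          fun t => b₀ (σinv t) / a₀ (σinv t))
        (normL N₀ N₁ θ₀ r₀ q₀ b₀ a₀)) ∧
    (∀ σ σinv : ℝ → ℝ, StrictMonoOn σ (Ioi 0) → (∀ t, 0 < t → 0 < σinv t ∧ σ (σinv t) = t) →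
      EquivOn (Ioi 0) σ (fun t => t ^ (θ₁ - θ₀) * (a₀ t / a₁ t)) →
      EquivNorms
        (normK (normK N₀ N₁ θ₀ q₀ a₀) (normK N₀ N₁ θ₁ q₁ a₁) 0 r₀
          fun t => b₀ (σinv t) / a₀ (σinv t))
        (normL N₀ N₁ θ₀ r₀ q₀ b₀ a₀)) := by
  have hθ₀_lt : θ₀ < 1 := hθ₀₁.trans hθ₁
  exact ⟨fun _ _ => equivNorms_normK_right h₀ h₁ hθ₀ hθ₀_lt hr₀ hq₀ ha₀ hb₀,
    fun hfin _ _ => equivNorms_normK_one h₀ h₁ hθ₀ hθ₀_lt hr₀ hq₀ hq₁ ha₀ ha₁ hb₀ hfin,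
    fun _ _ => equivNorms_normK_of_lt_one h₀ h₁ hθ₀ hθ₀₁ hθ₁ hr₀ hq₀ hq₁ ha₀ ha₁ hb₀⟩

end Reiteration

theorem theorem10
    (A₀ A₁ : QuasiBanach E)
    (hne : ∃ x : E, x ≠ 0 ∧ A₀.N x ≠ ∞ ∧ A₁.N x ≠ ∞)
    (θ₀ θ₁ : ℝ) (hθ₀ : 0 < θ₀) (hθ₀₁ : θ₀ < θ₁) (hθ₁ : θ₁ < 1)
    (r₀ q₀ q₁ : ℝ≥0∞) (hr₀ : 0 < r₀) (hq₀ : 0 < q₀) (hq₁ : 0 < q₁)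
    (a₀ a₁ b₀ : ℝ → ℝ)
    (h_sv_a₀ : SlowlyVarying a₀)
    (h_sv_a₁ : SlowlyVarying a₁)
    (h_sv_b₀ : SlowlyVarying b₀)
    (hfin : LqNorm r₀ (Ioi 1) (svWgt r₀ (fun s => b₀ s / a₀ s)) ≠ ∞) :
    (∀ σ σinv : ℝ → ℝ,
        StrictMonoOn σ (Ioi 0) →
        (∀ t ∈ Ioi (0:ℝ), DifferentiableAt ℝ σ t) →
        (∀ t ∈ Ioi (0:ℝ), σ t ∈ Ioi (0:ℝ) ∧ σinv (σ t) = t) →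
        (∀ t ∈ Ioi (0:ℝ), σinv t ∈ Ioi (0:ℝ) ∧ σ (σinv t) = t) →
        EquivOn (Ioi 0) σ (fun t => t ^ (1 - θ₀) * a₀ t) →
        EquivNorms
          (normK (normK A₀.N A₁.N θ₀ q₀ a₀) A₁.N 0 r₀ (fun t => b₀ (σinv t) / a₀ (σinv t)))
          (normL A₀.N A₁.N θ₀ r₀ q₀ b₀ a₀)) ∧
    (LqNorm q₁ (Ioo 0 1) (svWgt q₁ (fun s => a₁ s)) ≠ ∞ →
      ∀ σ σinv : ℝ → ℝ,
        StrictMonoOn σ (Ioi 0) →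
        (∀ t ∈ Ioi (0:ℝ), DifferentiableAt ℝ σ t) →
        (∀ t ∈ Ioi (0:ℝ), σ t ∈ Ioi (0:ℝ) ∧ σinv (σ t) = t) →
        (∀ t ∈ Ioi (0:ℝ), σinv t ∈ Ioi (0:ℝ) ∧ σ (σinv t) = t) →
        EquivOn (Ioi 0) σ
          (fun t => t ^ (1 - θ₀) * a₀ t / (LqNorm q₁ (Ioo 0 t) (svWgt q₁ (fun s => a₁ s))).toReal) →
        EquivNorms
          (normK (normK A₀.N A₁.N θ₀ q₀ a₀) (normK A₀.N A₁.N 1 q₁ a₁) 0 r₀ (fun t => b₀ (σinv t) / a₀ (σinv t)))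
          (normL A₀.N A₁.N θ₀ r₀ q₀ b₀ a₀)) ∧
    (∀ σ σinv : ℝ → ℝ,
        StrictMonoOn σ (Ioi 0) →
        (∀ t ∈ Ioi (0:ℝ), DifferentiableAt ℝ σ t) →
        (∀ t ∈ Ioi (0:ℝ), σ t ∈ Ioi (0:ℝ) ∧ σinv (σ t) = t) →
        (∀ t ∈ Ioi (0:ℝ), σinv t ∈ Ioi (0:ℝ) ∧ σ (σinv t) = t) →
        EquivOn (Ioi 0) σ (fun t => t ^ (θ₁ - θ₀) * (a₀ t / a₁ t)) →
        EquivNorms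
          (normK (normK A₀.N A₁.N θ₀ q₀ a₀) (normK A₀.N A₁.N θ₁ q₁ a₁) 0 r₀ (fun t => b₀ (σinv t) / a₀ (σinv t)))
          (normL A₀.N A₁.N θ₀ r₀ q₀ b₀ a₀)) := by
  have h := theorem10_general A₀.isQuasiNorm A₁.isQuasiNorm hθ₀ hθ₀₁ hθ₁ hr₀ hq₀ hq₁ h_sv_a₀ h_sv_a₁
    h_sv_b₀
  exact ⟨fun σ σinv hσ _ _ => h.1 σ σinv hσ, fun hfin₁ σ σinv hσ _ _ => h.2.1 hfin₁ σ σinv hσ,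
    fun σ σinv hσ _ _ => h.2.2 σ σinv hσ⟩

end
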